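/- arXiv:1412.7939 — 11 statements merged into one kernel-verified Lean document; each statement's English description precedes it below -/
import Mathlib

section
/- Let φ : ℤ → (0,∞) be a function such that for every t ∈ ℤ the series ∑_{j=-∞}^{t-1} φ(j)⁻¹ converges and φ(t)·∑_{j=-∞}^{t-1} φ(j)⁻¹ ≤ μ for some constant μ > 0. Then for any t₀ ∈ ℤ there exists a constant c > 0 (one may take c = μ·(∑_{j=-∞}^{t₀-1} φ(j)⁻¹)⁻¹) such that φ(t) ≤ c·(1 + μ⁻¹)^{t₀ - t} for all integers t ≥ t₀. -/
/-- If `φ : ℤ → (0,∞)` satisfies, for every `t`, the convergence of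
`∑_{j=-∞}^{t-1} φ(j)⁻¹` (reindexed as `∑_{n∈ℕ} φ(t-1-n)⁻¹`) together with the bound
`φ(t) · ∑_{j=-∞}^{t-1} φ(j)⁻¹ ≤ μ`, then for any `t₀` there is `c > 0` with
`φ(t) ≤ c · (1+μ⁻¹)^{t₀-t}` for all `t ≥ t₀`. -/
theorem stmt_0 (φ : ℤ → ℝ) (hφ : ∀ t : ℤ, 0 < φ t) (μ : ℝ) (hμ : 0 < μ)
    (hsum : ∀ t : ℤ, Summable fun n : ℕ => (φ (t - 1 - (n : ℤ)))⁻¹)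
    (hbd : ∀ t : ℤ, φ t * ∑' n : ℕ, (φ (t - 1 - (n : ℤ)))⁻¹ ≤ μ)
    (t₀ : ℤ) :
    ∃ c : ℝ, 0 < c ∧ ∀ t : ℤ, t₀ ≤ t → φ t ≤ c * (1 + μ⁻¹) ^ (t₀ - t) := by
  obtain ⟨S, hS⟩ : ∃ S : ℤ → ℝ, ∀ t, S t = ∑' n : ℕ, (φ (t - 1 - (n : ℤ)))⁻¹ :=
    ⟨_, fun _ => rfl⟩
  have hpos : ∀ t, 0 < S t := by
    intro t
    rw [hS]
    exact (hsum t).tsum_pos (fun n => (inv_pos.2 (hφ _)).le) 0 (inv_pos.2 (hφ _))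
  have hb : ∀ t, φ t * S t ≤ μ := by
    intro t
    rw [hS]
    exact hbd t
  have hstep : ∀ t, S (t + 1) = (φ t)⁻¹ + S t := by
    intro t
    rw [hS, hS, (hsum (t + 1)).tsum_eq_zero_add]
    congr 1
    · simp
    · refine tsum_congr fun n => ?_
      congr 2
      push_cast
      ring
  have hq : 0 < 1 + μ⁻¹ := by positivity
  have hgrow : ∀ t, S t * (1 + μ⁻¹) ≤ S (t + 1) := by
    intro t
    rw [hstep]
    have h1 : S t * μ⁻¹ ≤ (φ t)⁻¹ := by
      rw [← div_eq_mul_inv, div_le_iff₀ hμ, inv_mul_eq_div, le_div_iff₀ (hφ t), mul_comm]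
      exact hb t
    linarith
  have hind : ∀ n : ℕ, S t₀ * (1 + μ⁻¹) ^ n ≤ S (t₀ + n) := by
    intro n
    induction n with
    | zero => simp
    | succ k ih =>
      have h2 := hgrow (t₀ + k)
      have h3 := mul_le_mul_of_nonneg_right ih hq.le
      rw [pow_succ, ← mul_assoc]
      push_cast
      rw [← add_assoc]
      exact h3.trans h2
  refine ⟨μ * (S t₀)⁻¹, mul_pos hμ (inv_pos.2 (hpos _)), fun t ht => ?_⟩
  obtain ⟨n, rfl⟩ : ∃ n : ℕ, t = t₀ + n := ⟨(t - t₀).toNat, by omega⟩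
  have he : t₀ - (t₀ + (n : ℤ)) = -(n : ℤ) := by ring
  rw [he, zpow_neg, zpow_natCast, mul_assoc, ← mul_inv, ← div_eq_mul_inv,
    le_div_iff₀ (mul_pos (hpos _) (pow_pos hq n))]
  exact (mul_le_mul_of_nonneg_left (hind n) (hφ _).le).trans (hb _)
end

section
/- Let ψ : ℤ → (0,∞) be a function such that for every t ∈ ℤ the series ∑_{j=t}^{∞} ψ(j)⁻¹ converges and ψ(t)·∑_{j=t}^{∞} ψ(j)⁻¹ ≤ γ for some constant γ > 0. Then for any t₀ ∈ ℤ there exists a constant c̃ > 0 (one may take c̃ = γ·(∑_{j=t₀}^{∞} ψ(j)⁻¹)⁻¹) such that ψ(t) ≤ c̃·(1 + γ⁻¹)^{t - t₀} for all integers t ≤ t₀. -/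
/-- If `ψ : ℤ → (0,∞)` satisfies, for every `t`, the convergence of
`∑_{j=t}^{∞} ψ(j)⁻¹` (reindexed as `∑_{n∈ℕ} ψ(t+n)⁻¹`) together with the bound
`ψ(t) · ∑_{j=t}^{∞} ψ(j)⁻¹ ≤ γ`, then for any `t₀` there is `c̃ > 0` with
`ψ(t) ≤ c̃ · (1+γ⁻¹)^{t-t₀}` for all `t ≤ t₀`. -/
theorem stmt_1 (ψ : ℤ → ℝ) (hψ : ∀ t : ℤ, 0 < ψ t) (γ : ℝ) (hγ : 0 < γ)
    (hsum : ∀ t : ℤ, Summable fun n : ℕ => (ψ (t + (n : ℤ)))⁻¹)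
    (hbd : ∀ t : ℤ, ψ t * ∑' n : ℕ, (ψ (t + (n : ℤ)))⁻¹ ≤ γ)
    (t₀ : ℤ) :
    ∃ c : ℝ, 0 < c ∧ ∀ t : ℤ, t ≤ t₀ → ψ t ≤ c * (1 + γ⁻¹) ^ (t - t₀) := by
  obtain ⟨S, hS⟩ : ∃ S : ℤ → ℝ, ∀ t, S t = ∑' n : ℕ, (ψ (t + (n : ℤ)))⁻¹ :=
    ⟨_, fun _ => rfl⟩
  have hrec : ∀ t, S t = (ψ t)⁻¹ + S (t + 1) := by
    intro t
    rw [hS, hS, (hsum t).tsum_eq_zero_add]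
    congr 1
    · simp
    · refine tsum_congr fun n => ?_
      congr 2
      push_cast
      ring
  have hnn : ∀ t, 0 ≤ S t := fun t => by
    rw [hS]
    exact tsum_nonneg fun n => (inv_pos.2 (hψ _)).le
  have hpos : ∀ t, 0 < S t := fun t => by
    rw [hrec]
    have := inv_pos.2 (hψ t)
    linarith [hnn (t + 1)]
  have hb : ∀ t, ψ t * S t ≤ γ := fun t => by
    rw [hS]
    exact hbd t
  have hstep : ∀ t, (1 + γ⁻¹) * S (t + 1) ≤ S t := by
    intro t
    have h1 : γ⁻¹ * S t ≤ (ψ t)⁻¹ := by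
      rw [inv_mul_le_iff₀ hγ, ← div_eq_mul_inv, le_div_iff₀ (hψ t), mul_comm]
      exact hb t
    have h2 : γ⁻¹ * S (t + 1) ≤ γ⁻¹ * S t := by
      have := inv_pos.2 (hψ t)
      have := inv_pos.2 hγ
      have := hrec t
      gcongr
      linarith
    linarith [hrec t]
  have hq : 0 < 1 + γ⁻¹ := by positivity
  have hpow : ∀ n : ℕ, (1 + γ⁻¹) ^ n * S t₀ ≤ S (t₀ - n) := by
    intro n
    induction n with
    | zero => simp
    | succ k ih =>
      have h := hstep (t₀ - ((k + 1 : ℕ) : ℤ))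
      have e : t₀ - ((k + 1 : ℕ) : ℤ) + 1 = t₀ - k := by
        push_cast
        ring
      rw [e] at h
      calc (1 + γ⁻¹) ^ (k + 1) * S t₀ = (1 + γ⁻¹) * ((1 + γ⁻¹) ^ k * S t₀) := by ring
        _ ≤ (1 + γ⁻¹) * S (t₀ - k) := by gcongr
        _ ≤ _ := h
  refine ⟨γ * (S t₀)⁻¹, mul_pos hγ (inv_pos.2 (hpos t₀)), fun t ht => ?_⟩
  obtain ⟨n, hn⟩ := Int.eq_ofNat_of_zero_le (sub_nonneg.2 ht)
  have et : t = t₀ - n := by omega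
  subst et
  have e2 : t₀ - (n : ℤ) - t₀ = -(n : ℤ) := by ring
  rw [e2, zpow_neg, zpow_natCast, mul_assoc, ← mul_inv, ← div_eq_mul_inv,
    le_div_iff₀ (mul_pos (hpos t₀) (pow_pos hq n)), mul_comm (S t₀)]
  exact (mul_le_mul_of_nonneg_left (hpow n) (hψ _).le).trans (hb _)
end

section
/- Suppose the linear homogeneous system x(t+1) = A(t)x(t) admits an exponential dichotomy. Then x = 0 is the unique bounded solution of the system: if x : ℤ → 𝒳 satisfies x(t+1) = A(t)x(t) for all t ∈ ℤ and sup_{t ∈ ℤ} ‖x(t)‖ < ∞, then x(t) = 0 for all t ∈ ℤ. -/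
theorem aux_zero {E : Type*} [NormedAddCommGroup E] (y : E) (α β C : ℝ) (hα : 0 < α)
    (h : ∀ n : ℕ, ‖y‖ ≤ β * (1 + α) ^ (-(n : ℤ)) * C) : y = 0 := by
  have h1 : Filter.Tendsto (fun n : ℕ => ((1 + α)⁻¹) ^ n) Filter.atTop (nhds 0) :=
    tendsto_pow_atTop_nhds_zero_of_lt_one (by positivity) (inv_lt_one_of_one_lt₀ (by linarith))
  have h2 : Filter.Tendsto (fun n : ℕ => β * ((1 + α)⁻¹) ^ n * C) Filter.atTop (nhds 0) := by
    simpa using (h1.const_mul β).mul_const C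
  have h3 : ‖y‖ ≤ 0 := ge_of_tendsto' h2 (fun n => by
    have := h n
    rwa [zpow_neg, zpow_natCast, ← inv_pow] at this)
  exact norm_le_zero_iff.mp h3

/-- If the linear system `x(t+1) = A(t)x(t)` admits an exponential
dichotomy (with principal fundamental operator solution `X`, `X(t₀) = I`, projection `P`
and constants `α₁, α₂, β₁, β₂ > 0`), then `x = 0` is the unique bounded solution: any
solution `x` with `sup_t ‖x t‖ < ∞` vanishes identically. -/
theorem stmt_2 {𝕏 : Type*} [NormedAddCommGroup 𝕏] [NormedSpace ℝ 𝕏] [CompleteSpace 𝕏]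
    (A X Xinv : ℤ → 𝕏 →L[ℝ] 𝕏) (t₀ : ℤ)
    (hX : ∀ t : ℤ, X (t + 1) = A t * X t) (hX0 : X t₀ = 1)
    (hXinv : ∀ t : ℤ, X t * Xinv t = 1) (hXinv' : ∀ t : ℤ, Xinv t * X t = 1)
    (P : 𝕏 →L[ℝ] 𝕏) (hP : P * P = P)
    (α₁ α₂ β₁ β₂ : ℝ) (hα₁ : 0 < α₁) (hα₂ : 0 < α₂) (hβ₁ : 0 < β₁) (hβ₂ : 0 < β₂)
    (hd₁ : ∀ s t : ℤ, s ≤ t → ‖X t * P * Xinv s‖ ≤ β₁ * (1 + α₁) ^ (s - t))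
    (hd₂ : ∀ s t : ℤ, t ≤ s → ‖X t * (1 - P) * Xinv s‖ ≤ β₂ * (1 + α₂) ^ (t - s))
    (x : ℤ → 𝕏) (hx : ∀ t : ℤ, x (t + 1) = A t (x t))
    (hxbdd : ∃ C : ℝ, ∀ t : ℤ, ‖x t‖ ≤ C) :
    ∀ t : ℤ, x t = 0 := by
  obtain ⟨C, hC⟩ := hxbdd
  have hXX : ∀ t z, X t (Xinv t z) = z := fun t z => by
    simpa using congrArg (fun f => f z) (hXinv t)
  have hXX' : ∀ t z, Xinv t (X t z) = z := fun t z => by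
    simpa using congrArg (fun f => f z) (hXinv' t)
  have hstep : ∀ t, Xinv (t + 1) (x (t + 1)) = Xinv t (x t) := fun t => by
    have h1 : x (t + 1) = X (t + 1) (Xinv t (x t)) := by
      rw [hx, hX]; simp [hXX]
    rw [h1, hXX']
  have hconst : ∀ t, Xinv t (x t) = Xinv 0 (x 0) := fun t => by
    induction t using Int.induction_on with
    | zero => rfl
    | succ n ih => rw [hstep, ih]
    | pred n ih =>
      rw [← ih, ← hstep (-(n : ℤ) - 1)]
      simp
  intro t
  have e1 : X t (P (Xinv t (x t))) = 0 := by
    refine aux_zero _ α₁ β₁ C hα₁ fun n => ?_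
    have h := hd₁ (t - n) t (by omega)
    have h2 := (X t * P * Xinv (t - n)).le_of_opNorm_le_of_le h (hC (t - n))
    rw [show t - (n : ℤ) - t = -(n : ℤ) by ring] at h2
    simpa [hconst] using h2
  have e2 : X t ((1 - P) (Xinv t (x t))) = 0 := by
    refine aux_zero _ α₂ β₂ C hα₂ fun n => ?_
    have h := hd₂ (t + n) t (by omega)
    have h2 := (X t * (1 - P) * Xinv (t + n)).le_of_opNorm_le_of_le h (hC (t + n))
    rw [show t - (t + (n : ℤ)) = -(n : ℤ) by ring] at h2
    simpa [hconst] using h2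
  have e3 : X t (Xinv t (x t)) = X t (P (Xinv t (x t))) + X t ((1 - P) (Xinv t (x t))) := by
    simp
  rw [← hXX t (x t), e3, e1, e2, add_zero]
end

section
/- Suppose the linear homogeneous system x(t+1) = A(t)x(t) admits an exponential dichotomy with projection P and constants α₁, α₂, β₁, β₂, and suppose (θ_k) is a sequence of integers such that A(t+θ_k) converges to Ā(t) as k → ∞ for each t ∈ ℤ, where each Ā(t) is invertible. Then the sequence of operators X(t₀+θ_k) P X(t₀+θ_k)⁻¹ converges in B(𝒳) as k → ∞. -/
open Filter Topology

theorem aux_prod {R : Type*} [NormedRing R] (U V : ℕ → R) (F G : ℕ → ℕ → R)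
    (b : ℕ → ℝ) (D : ℝ) (hD : 0 < D) (hb : Tendsto b atTop (𝓝 0))
    (hF : ∀ n, CauchySeq (F n)) (hGF : ∀ n k, G n k * F n k = 1)
    (hU : ∀ n k, ‖U k * G n k‖ ≤ b n) (hFV : ∀ n k, ‖F n k * V k‖ ≤ D)
    (hV : ∀ k, ‖V k‖ ≤ D) :
    ∀ ε > 0, ∃ N, ∀ k ≥ N, ∀ l ≥ N, ‖U k * V l‖ < ε := by
  intro ε hε
  obtain ⟨n, hn⟩ := (hb.eventually (gt_mem_nhds (show (0:ℝ) < ε / (2 * D) by positivity))).exists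
  obtain ⟨N, hN⟩ := Metric.cauchySeq_iff.1 (hF n) 1 one_pos
  refine ⟨N, fun k hk l hl => ?_⟩
  have h1 : U k * V l = (U k * G n k) * (F n l * V l + (F n k - F n l) * V l) := by
    rw [← add_mul, add_sub_cancel, mul_assoc, ← mul_assoc (G n k), hGF, one_mul]
  have h2 : ‖F n k - F n l‖ ≤ 1 := by
    rw [← dist_eq_norm]; exact (hN k hk l hl).le
  have h3 : ‖F n l * V l + (F n k - F n l) * V l‖ ≤ 2 * D := by
    calc _ ≤ ‖F n l * V l‖ + ‖F n k - F n l‖ * ‖V l‖ :=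
          (norm_add_le _ _).trans (by gcongr; exact norm_mul_le _ _)
      _ ≤ D + 1 * D := by
          gcongr
          · exact hFV n l
          · exact hV l
      _ = 2 * D := by ring
  have hb0 : 0 ≤ b n := (norm_nonneg _).trans (hU n k)
  rw [h1]
  calc _ ≤ ‖U k * G n k‖ * ‖F n l * V l + (F n k - F n l) * V l‖ := norm_mul_le _ _
    _ ≤ b n * (2 * D) := by
        gcongr
        exact hU n k
    _ < ε := by rwa [lt_div_iff₀ (by positivity)] at hn

theorem aux_pow (α β : ℝ) (hα : 0 < α) :
    Tendsto (fun n : ℕ => β * (1 + α) ^ (-(n : ℤ))) atTop (𝓝 0) := by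
  have h := (tendsto_pow_atTop_nhds_zero_of_lt_one (r := (1 + α)⁻¹) (by positivity)
    (inv_lt_one_of_one_lt₀ (by linarith))).const_mul β
  simpa using h

theorem aux_le (α β : ℝ) (hα : 0 < α) (hβ : 0 < β) (n : ℕ) :
    β * (1 + α) ^ (-(n : ℤ)) ≤ β := by
  have : (1 + α) ^ (-(n : ℤ)) ≤ 1 := zpow_le_one_of_nonpos₀ (by linarith) (by omega)
  nlinarith

/-- Under an exponential dichotomy with projection `P`, if `(θ_k)` is a
sequence of integers with `A(t+θ_k) → Ā(t)` for each `t`, where each `Ā(t)` is invertible,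
then the sequence of operators `X(t₀+θ_k) P X(t₀+θ_k)⁻¹` converges in `B(𝒳)`. -/
theorem stmt_6 {𝕏 : Type*} [NormedAddCommGroup 𝕏] [NormedSpace ℝ 𝕏] [CompleteSpace 𝕏]
    (A X Xinv : ℤ → 𝕏 →L[ℝ] 𝕏) (t₀ : ℤ)
    (hX : ∀ t : ℤ, X (t + 1) = A t * X t) (hX0 : X t₀ = 1)
    (hXinv : ∀ t : ℤ, X t * Xinv t = 1) (hXinv' : ∀ t : ℤ, Xinv t * X t = 1)
    (P : 𝕏 →L[ℝ] 𝕏) (hP : P * P = P)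
    (α₁ α₂ β₁ β₂ : ℝ) (hα₁ : 0 < α₁) (hα₂ : 0 < α₂) (hβ₁ : 0 < β₁) (hβ₂ : 0 < β₂)
    (hd₁ : ∀ s t : ℤ, s ≤ t → ‖X t * P * Xinv s‖ ≤ β₁ * (1 + α₁) ^ (s - t))
    (hd₂ : ∀ s t : ℤ, t ≤ s → ‖X t * (1 - P) * Xinv s‖ ≤ β₂ * (1 + α₂) ^ (t - s))
    (θ : ℕ → ℤ) (Abar AbarInv : ℤ → 𝕏 →L[ℝ] 𝕏)
    (hconv : ∀ t : ℤ, Tendsto (fun k => A (t + θ k)) atTop (𝓝 (Abar t)))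
    (hAbarInv : ∀ t : ℤ, Abar t * AbarInv t = 1) (hAbarInv' : ∀ t : ℤ, AbarInv t * Abar t = 1) :
    ∃ L : 𝕏 →L[ℝ] 𝕏,
      Tendsto (fun k => X (t₀ + θ k) * P * Xinv (t₀ + θ k)) atTop (𝓝 L) := by
  have cancel : ∀ (M N : 𝕏 →L[ℝ] 𝕏) (s : ℤ), M * Xinv s * (X s * N) = M * N := by
    intro M N s
    rw [mul_assoc, ← mul_assoc (Xinv s), hXinv', one_mul]
  have hA : ∀ t, A t = X (t + 1) * Xinv t := by
    intro t; rw [hX, mul_assoc, hXinv, mul_one]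
  have hinvA : ∀ t, Ring.inverse (A t) = X t * Xinv (t + 1) := by
    intro t
    let u : (𝕏 →L[ℝ] 𝕏)ˣ := ⟨X (t + 1) * Xinv t, X t * Xinv (t + 1),
      by rw [cancel, hXinv], by rw [cancel, hXinv]⟩
    rw [hA]
    exact Ring.inverse_unit u
  have hconv' : ∀ t : ℤ, Tendsto (fun k => X (t + θ k) * Xinv (t + θ k + 1)) atTop
      (𝓝 (AbarInv t)) := by
    intro t
    let u : (𝕏 →L[ℝ] 𝕏)ˣ := ⟨Abar t, AbarInv t, hAbarInv t, hAbarInv' t⟩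
    have h := (NormedRing.inverse_continuousAt u).tendsto.comp (hconv t)
    rw [Ring.inverse_unit] at h
    refine h.congr fun k => ?_
    exact hinvA _
  have hfwd : ∀ n : ℕ, ∃ L, Tendsto (fun k => X (t₀ + θ k + n) * Xinv (t₀ + θ k)) atTop (𝓝 L) := by
    intro n
    induction n with
    | zero => exact ⟨1, by simp [hXinv]⟩
    | succ n ih =>
      obtain ⟨L, hL⟩ := ih
      refine ⟨_, ((hconv (t₀ + n)).mul hL).congr fun k => ?_⟩
      rw [← mul_assoc, show t₀ + n + θ k = t₀ + θ k + n by ring, ← hX]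
      push_cast
      rw [add_assoc (t₀ + θ k)]
  have hbwd : ∀ n : ℕ, ∃ L, Tendsto (fun k => X (t₀ + θ k - n) * Xinv (t₀ + θ k)) atTop (𝓝 L) := by
    intro n
    induction n with
    | zero => exact ⟨1, by simp [hXinv]⟩
    | succ n ih =>
      obtain ⟨L, hL⟩ := ih
      refine ⟨_, ((hconv' (t₀ - n - 1)).mul hL).congr fun k => ?_⟩
      rw [show t₀ - n - 1 + θ k + 1 = t₀ + θ k - n by ring, cancel]
      push_cast
      rw [show t₀ - n - 1 + θ k = t₀ + θ k - (n + 1) by ring]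
  have b1 : ∀ (s t : ℤ) (n : ℕ), t = s + n → ‖X t * P * Xinv s‖ ≤ β₁ * (1 + α₁) ^ (-(n : ℤ)) := by
    intro s t n h
    have := hd₁ s t (by omega)
    rwa [show s - t = -(n : ℤ) by omega] at this
  have b2 : ∀ (s t : ℤ) (n : ℕ), s = t + n →
      ‖X t * (1 - P) * Xinv s‖ ≤ β₂ * (1 + α₂) ^ (-(n : ℤ)) := by
    intro s t n h
    have := hd₂ s t (by omega)
    rwa [show t - s = -(n : ℤ) by omega] at this
  have e1 := aux_prod (fun k => X (t₀ + θ k) * (1 - P) * Xinv (t₀ + θ k))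
    (fun k => X (t₀ + θ k) * P * Xinv (t₀ + θ k))
    (fun n k => X (t₀ + θ k + n) * Xinv (t₀ + θ k))
    (fun n k => X (t₀ + θ k) * Xinv (t₀ + θ k + n))
    (fun n => β₂ * (1 + α₂) ^ (-(n : ℤ))) β₁ hβ₁ (aux_pow _ _ hα₂)
    (fun n => (hfwd n).choose_spec.cauchySeq)
    (fun n k => by rw [cancel, hXinv])
    (fun n k => by rw [cancel]; exact b2 _ _ n (by ring))
    (fun n k => by
      beta_reduce
      rw [mul_assoc (X (t₀ + θ k)), cancel, ← mul_assoc]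
      exact (b1 _ _ n (by ring)).trans (aux_le _ _ hα₁ hβ₁ n))
    (fun k => (b1 _ _ 0 (by simp)).trans (aux_le _ _ hα₁ hβ₁ 0))
  have e2 := aux_prod (fun k => X (t₀ + θ k) * P * Xinv (t₀ + θ k))
    (fun k => X (t₀ + θ k) * (1 - P) * Xinv (t₀ + θ k))
    (fun n k => X (t₀ + θ k - n) * Xinv (t₀ + θ k))
    (fun n k => X (t₀ + θ k) * Xinv (t₀ + θ k - n))
    (fun n => β₁ * (1 + α₁) ^ (-(n : ℤ))) β₂ hβ₂ (aux_pow _ _ hα₁)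
    (fun n => (hbwd n).choose_spec.cauchySeq)
    (fun n k => by rw [cancel, hXinv])
    (fun n k => by rw [cancel]; exact b1 _ _ n (by ring))
    (fun n k => by
      beta_reduce
      rw [mul_assoc (X (t₀ + θ k)), cancel, ← mul_assoc]
      exact (b2 _ _ n (by ring)).trans (aux_le _ _ hα₂ hβ₂ n))
    (fun k => (b2 _ _ 0 (by simp)).trans (aux_le _ _ hα₂ hβ₂ 0))
  refine cauchySeq_tendsto_of_complete (Metric.cauchySeq_iff.2 fun ε hε => ?_)
  obtain ⟨N₁, h₁⟩ := e1 (ε / 2) (by positivity)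
  obtain ⟨N₂, h₂⟩ := e2 (ε / 2) (by positivity)
  refine ⟨max N₁ N₂, fun k hk l hl => ?_⟩
  have h1 := h₁ k (le_of_max_le_left hk) l (le_of_max_le_left hl)
  have h2 := h₂ k (le_of_max_le_right hk) l (le_of_max_le_right hl)
  have hQ : ∀ s, X s * (1 - P) * Xinv s = 1 - X s * P * Xinv s := by
    intro s; rw [mul_sub, sub_mul, mul_one, hXinv]
  simp only [hQ] at h1 h2
  rw [dist_eq_norm]
  have : ∀ a b : 𝕏 →L[ℝ] 𝕏, a - b = a * (1 - b) - (1 - a) * b := by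
    intro a b; noncomm_ring
  rw [this]
  exact (norm_sub_le _ _).trans_lt (by linarith)
end

section
/- Suppose the linear homogeneous system x(t+1) = A(t)x(t) admits an exponential dichotomy with projection P and constants α₁, α₂, β₁, β₂. Suppose A is discrete almost automorphic: for any sequence of integers there is a subsequence (θ_k) such that A(t+θ_k) → Ā(t) and Ā(t−θ_k) → A(t) as k → ∞ for each t ∈ ℤ; assume each Ā(t) is invertible, and let X̄ be the principal fundamental matrix solution of the limiting system x(t+1) = Ā(t)x(t) with X̄(t₀) = I. Then there exists a projection P̄ (P̄² = P̄) such that: (i) X(t+θ_k) P X(s+θ_k)⁻¹ → X̄(t) P̄ X̄(s)⁻¹ as k → ∞ for each t ∈ ℤ and each integer s ≤ t; (ii) X(t+θ_k)(I−P)X(s+θ_k)⁻¹ → X̄(t)(I−P̄)X̄(s)⁻¹ as k → ∞ for each t ∈ ℤ and each integer s ≥ t; (iii) the limiting system admits an exponential dichotomy with projection P̄ and the same constants α₁, α₂, β₁, β₂; and (iv) X̄(t−θ_k) P̄ X̄(s−θ_k)⁻¹ → X(t) P X(s)⁻¹ for s ≤ t and X̄(t−θ_k)(I−P̄)X̄(s−θ_k)⁻¹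 → X(t)(I−P)X(s)⁻¹ for s ≥ t, as k → ∞, for each t ∈ ℤ. -/
open Filter Topology

structure Dich {R : Type*} [NormedRing R] (A X Xi : ℤ → R) (P : R) (α₁ α₂ β₁ β₂ : ℝ) : Prop where
  hX : ∀ t : ℤ, X (t + 1) = A t * X t
  hi : ∀ t : ℤ, X t * Xi t = 1
  hi' : ∀ t : ℤ, Xi t * X t = 1
  hP : P * P = P
  hα₁ : 0 < α₁
  hα₂ : 0 < α₂
  hβ₁ : 0 < β₁
  hβ₂ : 0 < β₂
  hd₁ : ∀ s t : ℤ, s ≤ t → ‖X t * P * Xi s‖ ≤ β₁ * (1 + α₁) ^ (s - t)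
  hd₂ : ∀ s t : ℤ, t ≤ s → ‖X t * (1 - P) * Xi s‖ ≤ β₂ * (1 + α₂) ^ (t - s)

namespace Dich

variable {R : Type*} [NormedRing R] {A X Xi B Y Yi : ℤ → R} {P Q : R} {α₁ α₂ β₁ β₂ : ℝ}

theorem shift (h : Dich A X Xi P α₁ α₂ β₁ β₂) (m : ℤ) :
    Dich (fun t => A (t + m)) (fun t => X (t + m)) (fun t => Xi (t + m)) P α₁ α₂ β₁ β₂ where
  hX t := by rw [← h.hX]; congr 1; ring
  hi t := h.hi _
  hi' t := h.hi' _
  hP := h.hP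
  hα₁ := h.hα₁
  hα₂ := h.hα₂
  hβ₁ := h.hβ₁
  hβ₂ := h.hβ₂
  hd₁ s t hst := by
    have := h.hd₁ (s + m) (t + m) (by omega)
    rwa [show s + m - (t + m) = s - t by ring] at this
  hd₂ s t hst := by
    have := h.hd₂ (s + m) (t + m) (by omega)
    rwa [show t + m - (s + m) = t - s by ring] at this

theorem hXi (h : Dich A X Xi P α₁ α₂ β₁ β₂) (t : ℤ) : Xi t = Xi (t + 1) * A t := by
  calc Xi t = (Xi (t + 1) * X (t + 1)) * Xi t := by rw [h.hi', one_mul]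
    _ = Xi (t + 1) * A t * (X t * Xi t) := by rw [h.hX]; noncomm_ring
    _ = _ := by rw [h.hi, mul_one]

theorem bd₁ (h : Dich A X Xi P α₁ α₂ β₁ β₂) {s t : ℤ} (hst : s ≤ t) :
    ‖X t * P * Xi s‖ ≤ β₁ := by
  refine (h.hd₁ s t hst).trans (mul_le_of_le_one_right h.hβ₁.le ?_)
  exact zpow_le_one_of_nonpos₀ (by linarith [h.hα₁]) (by omega)

theorem bd₂ (h : Dich A X Xi P α₁ α₂ β₁ β₂) {s t : ℤ} (hst : t ≤ s) :
    ‖X t * (1 - P) * Xi s‖ ≤ β₂ := by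
  refine (h.hd₂ s t hst).trans (mul_le_of_le_one_right h.hβ₂.le ?_)
  exact zpow_le_one_of_nonpos₀ (by linarith [h.hα₂]) (by omega)

theorem bd₁' (h : Dich A X Xi P α₁ α₂ β₁ β₂) {s t : ℤ} (n : ℕ) (hst : t = s + n) :
    ‖X t * P * Xi s‖ ≤ β₁ * ((1 + α₁)⁻¹) ^ n := by
  have := h.hd₁ s t (by omega)
  rwa [show s - t = -(n : ℤ) by omega, zpow_neg, zpow_natCast, ← inv_pow] at this

theorem seq_bound (W : ℕ → R) (e : ℕ → ℝ) (h : ∀ j, ‖W j - W (j + 1)‖ ≤ e j) (n : ℕ) :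
    ‖W 0‖ ≤ ‖W n‖ + ∑ j ∈ Finset.range n, e j := by
  induction n with
  | zero => simp
  | succ n ih =>
    rw [Finset.sum_range_succ]
    have h1 : ‖W n‖ ≤ ‖W n - W (n + 1)‖ + ‖W (n + 1)‖ := by
      simpa using norm_add_le (W n - W (n + 1)) (W (n + 1))
    linarith [h n]

theorem norm_mul3 (u a v : R) {p q : ℝ} (hp : 0 ≤ p) (hu : ‖u‖ ≤ p) (hv : ‖v‖ ≤ q) :
    ‖u * a * v‖ ≤ p * q * ‖a‖ := by
  calc ‖u * a * v‖ ≤ ‖u * a‖ * ‖v‖ := norm_mul_le _ _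
    _ ≤ (‖u‖ * ‖a‖) * ‖v‖ := by gcongr; exact norm_mul_le _ _
    _ ≤ (p * ‖a‖) * q := by gcongr
    _ = _ := by ring

theorem half₁ (h : Dich A X Xi P α₁ α₂ β₁ β₂) (g : Dich B Y Yi Q α₁ α₂ β₁ β₂) (t : ℤ) (n : ℕ) :
    ‖(X t * P * Xi t) * (Y t * (1 - Q) * Yi t)‖ ≤ β₁ * β₂ * ((1 + α₁)⁻¹) ^ n +
      ∑ j ∈ Finset.range n, β₁ * β₂ * ‖A (t - j - 1) - B (t - j - 1)‖ := by
  have key := seq_bound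
    (fun j : ℕ => (X t * P * Xi (t - j)) * (Y (t - j) * (1 - Q) * Yi t))
    (fun j : ℕ => β₁ * β₂ * ‖A (t - j - 1) - B (t - j - 1)‖) (fun j => ?_) n
  · simp only [Nat.cast_zero, sub_zero] at key
    refine key.trans (add_le_add_left ?_ _)
    refine (norm_mul_le _ _).trans ?_
    have h1 := h.bd₁' (s := t - n) (t := t) n (by ring)
    have h2 := g.bd₂ (s := t) (t := t - n) (by omega)
    calc _ ≤ (β₁ * ((1 + α₁)⁻¹) ^ n) * β₂ := by
          gcongr
          exact (norm_nonneg _).trans h1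
      _ = _ := by ring
  · have e1 := h.hXi (t - j - 1)
    have e2 := g.hX (t - j - 1)
    rw [show t - j - 1 + 1 = t - (j : ℤ) by ring] at e1 e2
    have h1 := h.bd₁ (s := t - j) (t := t) (by omega)
    have h2 := g.bd₂ (s := t) (t := t - j - 1) (by omega)
    have := norm_mul3 _ (B (t - j - 1) - A (t - j - 1)) _ h.hβ₁.le h1 h2
    rw [norm_sub_rev (B _)] at this
    convert this using 2
    push_cast
    rw [show t - ((j : ℤ) + 1) = t - j - 1 by ring, e1, e2]
    noncomm_ring

theorem half₂ (h : Dich A X Xi P α₁ α₂ β₁ β₂) (g : Dich B Y Yi Q α₁ α₂ β₁ β₂) (t : ℤ) (n : ℕ) :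
    ‖(X t * (1 - P) * Xi t) * (Y t * Q * Yi t)‖ ≤ β₁ * β₂ * ((1 + α₁)⁻¹) ^ n +
      ∑ j ∈ Finset.range n, β₁ * β₂ * ‖A (t + j) - B (t + j)‖ := by
  have key := seq_bound
    (fun j : ℕ => (X t * (1 - P) * Xi (t + j)) * (Y (t + j) * Q * Yi t))
    (fun j : ℕ => β₁ * β₂ * ‖A (t + j) - B (t + j)‖) (fun j => ?_) n
  · simp only [Nat.cast_zero, add_zero] at key
    refine key.trans (add_le_add_left ?_ _)
    refine (norm_mul_le _ _).trans ?_
    have h1 := g.bd₁' (s := t) (t := t + n) n (by ring)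
    have h2 := h.bd₂ (s := t + n) (t := t) (by omega)
    calc _ ≤ β₂ * (β₁ * ((1 + α₁)⁻¹) ^ n) := by
          gcongr
          exact h.hβ₂.le
      _ = _ := by ring
  · have e1 := h.hXi (t + j)
    have e2 := g.hX (t + j)
    have h1 := g.bd₁ (s := t) (t := t + j) (by omega)
    have h2 := h.bd₂ (s := t + j + 1) (t := t) (by omega)
    have := norm_mul3 _ (A (t + j) - B (t + j)) _ h.hβ₂.le h2 h1
    rw [mul_comm β₂] at this
    convert this using 2
    push_cast
    rw [show t + ((j : ℤ) + 1) = t + j + 1 by ring, e1, e2]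
    noncomm_ring

theorem compl (h : Dich A X Xi P α₁ α₂ β₁ β₂) (t : ℤ) :
    X t * (1 - P) * Xi t = 1 - X t * P * Xi t := by
  rw [mul_sub, sub_mul, mul_one, h.hi]

theorem comparison (h : Dich A X Xi P α₁ α₂ β₁ β₂) (g : Dich B Y Yi Q α₁ α₂ β₁ β₂)
    (t : ℤ) (n : ℕ) :
    ‖X t * P * Xi t - Y t * Q * Yi t‖ ≤ 2 * (β₁ * β₂ * ((1 + α₁)⁻¹) ^ n) +
      (∑ j ∈ Finset.range n, β₁ * β₂ * ‖A (t - j - 1) - B (t - j - 1)‖ +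
      ∑ j ∈ Finset.range n, β₁ * β₂ * ‖A (t + j) - B (t + j)‖) := by
  have h1 := h.half₁ g t n
  have h2 := h.half₂ g t n
  have e : X t * P * Xi t - Y t * Q * Yi t =
      (X t * P * Xi t) * (Y t * (1 - Q) * Yi t) - (X t * (1 - P) * Xi t) * (Y t * Q * Yi t) := by
    rw [h.compl, g.compl]; noncomm_ring
  rw [e]
  refine (norm_sub_le _ _).trans ?_
  linarith

theorem tendsto_geom (h : Dich A X Xi P α₁ α₂ β₁ β₂) :
    Tendsto (fun n : ℕ => 2 * (β₁ * β₂ * ((1 + α₁)⁻¹) ^ n)) atTop (𝓝 0) := by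
  have : Tendsto (fun n : ℕ => ((1 + α₁)⁻¹) ^ n) atTop (𝓝 0) :=
    tendsto_pow_atTop_nhds_zero_of_lt_one (inv_nonneg.2 (by linarith [h.hα₁]))
      (inv_lt_one_of_one_lt₀ (by linarith [h.hα₁]))
  simpa using (this.const_mul (β₁ * β₂)).const_mul 2

theorem unique (h : Dich A X Xi P α₁ α₂ β₁ β₂) (g : Dich A X Xi Q α₁ α₂ β₁ β₂) : P = Q := by
  have h0 : ‖X 0 * P * Xi 0 - X 0 * Q * Xi 0‖ ≤ 0 := by
    refine ge_of_tendsto' h.tendsto_geom fun n => ?_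
    simpa using h.comparison g 0 n
  have h1 : X 0 * P * Xi 0 = X 0 * Q * Xi 0 := sub_eq_zero.1 (norm_le_zero_iff.1 h0)
  calc P = (Xi 0 * X 0) * P * (Xi 0 * X 0) := by rw [h.hi']; simp
    _ = Xi 0 * (X 0 * P * Xi 0) * X 0 := by noncomm_ring
    _ = (Xi 0 * X 0) * Q * (Xi 0 * X 0) := by rw [h1]; noncomm_ring
    _ = Q := by rw [h.hi']; simp

/-- Transition operators converge, forward version. -/
theorem trans_fwd (h : Dich A X Xi P α₁ α₂ β₁ β₂) {θ : ℕ → ℤ}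
    (hi : ∀ t, Y t * Yi t = 1) (hY : ∀ t, Y (t + 1) = B t * Y t)
    (hAB : ∀ t, Tendsto (fun k => A (t + θ k)) atTop (𝓝 (B t))) (s : ℤ) (n : ℕ) :
    Tendsto (fun k => X (s + n + θ k) * Xi (s + θ k)) atTop (𝓝 (Y (s + n) * Yi s)) := by
  induction n with
  | zero => simp [h.hi, hi]
  | succ n ih =>
    have := (hAB (s + n)).mul ih
    rw [← mul_assoc, ← hY, add_assoc] at this
    push_cast
    refine this.congr fun k => ?_
    rw [← mul_assoc, ← h.hX]
    congr 2; ring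

theorem trans_bwd [CompleteSpace R] (h : Dich A X Xi P α₁ α₂ β₁ β₂) {θ : ℕ → ℤ}
    (hi : ∀ t, Y t * Yi t = 1) (hi' : ∀ t, Yi t * Y t = 1) (hY : ∀ t, Y (t + 1) = B t * Y t)
    (hAB : ∀ t, Tendsto (fun k => A (t + θ k)) atTop (𝓝 (B t))) (s : ℤ) (n : ℕ) :
    Tendsto (fun k => X (s + θ k) * Xi (s + n + θ k)) atTop (𝓝 (Y s * Yi (s + n))) := by
  have h1 := h.trans_fwd hi hY hAB s n
  have inv : ∀ (Z Zi : ℤ → R), (∀ t, Z t * Zi t = 1) → (∀ t, Zi t * Z t = 1) → ∀ a b,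
      ∃ u : Rˣ, (u : R) = Z a * Zi b ∧ Ring.inverse (Z a * Zi b) = Z b * Zi a := by
    intro Z Zi e e' a b
    let u : Rˣ := ⟨Z a * Zi b, Z b * Zi a,
      by rw [mul_assoc, ← mul_assoc (Zi b), e', one_mul, e],
      by rw [mul_assoc, ← mul_assoc (Zi a), e', one_mul, e]⟩
    exact ⟨u, rfl, Ring.inverse_unit u⟩
  obtain ⟨u, hu, hu'⟩ := inv Y Yi hi hi' (s + n) s
  have h2 := NormedRing.inverse_continuousAt u
  rw [hu] at h2
  have h3 := h2.tendsto.comp h1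
  rw [hu'] at h3
  refine h3.congr fun k => ?_
  obtain ⟨v, hv, hv'⟩ := inv X Xi h.hi h.hi' (s + n + θ k) (s + θ k)
  exact hv'

theorem trans_all [CompleteSpace R] (h : Dich A X Xi P α₁ α₂ β₁ β₂) {θ : ℕ → ℤ}
    (hi : ∀ t, Y t * Yi t = 1) (hi' : ∀ t, Yi t * Y t = 1) (hY : ∀ t, Y (t + 1) = B t * Y t)
    (hAB : ∀ t, Tendsto (fun k => A (t + θ k)) atTop (𝓝 (B t))) (t s : ℤ) :
    Tendsto (fun k => X (t + θ k) * Xi (s + θ k)) atTop (𝓝 (Y t * Yi s)) := by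
  rcases le_total s t with hst | hst
  · obtain ⟨n, rfl⟩ := Int.le.dest hst
    exact h.trans_fwd hi hY hAB s n
  · obtain ⟨n, rfl⟩ := Int.le.dest hst
    exact h.trans_bwd hi hi' hY hAB t n

theorem cauchy (h : Dich A X Xi P α₁ α₂ β₁ β₂) {θ : ℕ → ℤ}
    (hAB : ∀ t, Tendsto (fun k => A (t + θ k)) atTop (𝓝 (B t))) (t : ℤ) :
    CauchySeq (fun k => X (t + θ k) * P * Xi (t + θ k)) := by
  have hc : ∀ r : ℤ, Tendsto (fun p : ℕ × ℕ => β₁ * β₂ * ‖A (r + θ p.1) - A (r + θ p.2)‖)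
      atTop (𝓝 0) := by
    intro r
    have h1 : Tendsto (fun p : ℕ × ℕ => A (r + θ p.1)) atTop (𝓝 (B r)) := by
      rw [← prod_atTop_atTop_eq]; exact (hAB r).comp tendsto_fst
    have h2 : Tendsto (fun p : ℕ × ℕ => A (r + θ p.2)) atTop (𝓝 (B r)) := by
      rw [← prod_atTop_atTop_eq]; exact (hAB r).comp tendsto_snd
    simpa using ((h1.sub h2).norm).const_mul (β₁ * β₂)
  rw [cauchySeq_iff_tendsto_dist_atTop_0]
  rw [Metric.tendsto_nhds]
  intro ε hε
  obtain ⟨n, hn⟩ := (h.tendsto_geom.eventually (gt_mem_nhds (half_pos hε))).exists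
  have hs := (tendsto_finsetSum (Finset.range n) fun j _ => hc (t - j - 1)).add
    (tendsto_finsetSum (Finset.range n) fun j _ => hc (t + j))
  simp only [Finset.sum_const_zero, add_zero] at hs
  filter_upwards [hs.eventually (gt_mem_nhds (half_pos hε))] with p hp
  have := (h.shift (θ p.1)).comparison (h.shift (θ p.2)) t n
  rw [Real.dist_0_eq_abs, abs_of_nonneg dist_nonneg, dist_eq_norm]
  linarith

theorem limit [CompleteSpace R] (h : Dich A X Xi P α₁ α₂ β₁ β₂) {θ : ℕ → ℤ}
    (hi : ∀ t, Y t * Yi t = 1) (hi' : ∀ t, Yi t * Y t = 1) (hY : ∀ t, Y (t + 1) = B t * Y t)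
    (hAB : ∀ t, Tendsto (fun k => A (t + θ k)) atTop (𝓝 (B t))) :
    ∃ Q, Dich B Y Yi Q α₁ α₂ β₁ β₂ ∧
      (∀ t s, Tendsto (fun k => X (t + θ k) * P * Xi (s + θ k)) atTop (𝓝 (Y t * Q * Yi s))) ∧
      (∀ t s, Tendsto (fun k => X (t + θ k) * (1 - P) * Xi (s + θ k)) atTop
        (𝓝 (Y t * (1 - Q) * Yi s))) := by
  obtain ⟨L, hL⟩ := cauchySeq_tendsto_of_complete (h.cauchy hAB 0)
  have T := h.trans_all hi hi' hY hAB
  have c1 : ∀ t s, Tendsto (fun k => X (t + θ k) * P * Xi (s + θ k)) atTop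
      (𝓝 (Y t * (Yi 0 * L * Y 0) * Yi s)) := by
    intro t s
    have := ((T t 0).mul hL).mul (T 0 s)
    rw [show Y t * (Yi 0 * L * Y 0) * Yi s = Y t * Yi 0 * L * (Y 0 * Yi s) by noncomm_ring]
    refine this.congr fun k => ?_
    calc _ = X (t + θ k) * (Xi (0 + θ k) * X (0 + θ k)) * P * (Xi (0 + θ k) * X (0 + θ k))
          * Xi (s + θ k) := by noncomm_ring
      _ = _ := by simp only [h.hi', mul_one]
  have c2 : ∀ t s, Tendsto (fun k => X (t + θ k) * (1 - P) * Xi (s + θ k)) atTop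
      (𝓝 (Y t * (1 - (Yi 0 * L * Y 0)) * Yi s)) := by
    intro t s
    have := (T t s).sub (c1 t s)
    simpa only [mul_sub, sub_mul, mul_one] using this
  have LL : L * L = L := by
    refine tendsto_nhds_unique (hL.mul hL) (hL.congr fun k => ?_)
    symm
    calc _ = X (0 + θ k) * P * (Xi (0 + θ k) * X (0 + θ k)) * P * Xi (0 + θ k) := by noncomm_ring
      _ = X (0 + θ k) * (P * P) * Xi (0 + θ k) := by rw [h.hi']; noncomm_ring
      _ = _ := by rw [h.hP]
  refine ⟨Yi 0 * L * Y 0, ⟨hY, hi, hi', ?_, h.hα₁, h.hα₂, h.hβ₁, h.hβ₂, ?_, ?_⟩, c1, c2⟩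
  · calc _ = Yi 0 * L * (Y 0 * Yi 0) * L * Y 0 := by noncomm_ring
      _ = Yi 0 * (L * L) * Y 0 := by rw [hi]; noncomm_ring
      _ = _ := by rw [LL]
  · intro s t hst
    exact le_of_tendsto' (c1 t s).norm fun k => (h.shift (θ k)).hd₁ s t hst
  · intro s t hst
    exact le_of_tendsto' (c2 t s).norm fun k => (h.shift (θ k)).hd₂ s t hst

end Dich

/-- Under an exponential dichotomy with projection `P` and constants
`α₁, α₂, β₁, β₂`, if `(θ_k)` realizes the almost automorphy of `A`
(`A(t+θ_k) → Ā(t)` and `Ā(t−θ_k) → A(t)` for each `t`), each `Ā(t)` is invertible, and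
`X̄` is the principal fundamental solution of the limiting system `x(t+1) = Ā(t)x(t)`,
then there is a projection `P̄` such that:
(i) `X(t+θ_k) P X(s+θ_k)⁻¹ → X̄(t) P̄ X̄(s)⁻¹` for `s ≤ t`;
(ii) `X(t+θ_k)(I−P) X(s+θ_k)⁻¹ → X̄(t)(I−P̄) X̄(s)⁻¹` for `t ≤ s`;
(iii) the limiting system admits an exponential dichotomy with projection `P̄` and the
same constants; and
(iv) `X̄(t−θ_k) P̄ X̄(s−θ_k)⁻¹ → X(t) P X(s)⁻¹` for `s ≤ t` and
`X̄(t−θ_k)(I−P̄) X̄(s−θ_k)⁻¹ → X(t)(I−P) X(s)⁻¹` for `t ≤ s`. -/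
theorem stmt_7 {𝕏 : Type*} [NormedAddCommGroup 𝕏] [NormedSpace ℝ 𝕏] [CompleteSpace 𝕏]
    (A X Xinv : ℤ → 𝕏 →L[ℝ] 𝕏) (t₀ : ℤ)
    (hX : ∀ t : ℤ, X (t + 1) = A t * X t) (hX0 : X t₀ = 1)
    (hXinv : ∀ t : ℤ, X t * Xinv t = 1) (hXinv' : ∀ t : ℤ, Xinv t * X t = 1)
    (P : 𝕏 →L[ℝ] 𝕏) (hP : P * P = P)
    (α₁ α₂ β₁ β₂ : ℝ) (hα₁ : 0 < α₁) (hα₂ : 0 < α₂) (hβ₁ : 0 < β₁) (hβ₂ : 0 < β₂)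
    (hd₁ : ∀ s t : ℤ, s ≤ t → ‖X t * P * Xinv s‖ ≤ β₁ * (1 + α₁) ^ (s - t))
    (hd₂ : ∀ s t : ℤ, t ≤ s → ‖X t * (1 - P) * Xinv s‖ ≤ β₂ * (1 + α₂) ^ (t - s))
    (θ : ℕ → ℤ) (Abar : ℤ → 𝕏 →L[ℝ] 𝕏)
    (hAfwd : ∀ t : ℤ, Tendsto (fun k => A (t + θ k)) atTop (𝓝 (Abar t)))
    (hAbwd : ∀ t : ℤ, Tendsto (fun k => Abar (t - θ k)) atTop (𝓝 (A t)))
    (Xbar Xbarinv : ℤ → 𝕏 →L[ℝ] 𝕏)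
    (hXbar : ∀ t : ℤ, Xbar (t + 1) = Abar t * Xbar t) (hXbar0 : Xbar t₀ = 1)
    (hXbarinv : ∀ t : ℤ, Xbar t * Xbarinv t = 1)
    (hXbarinv' : ∀ t : ℤ, Xbarinv t * Xbar t = 1) :
    ∃ Pbar : 𝕏 →L[ℝ] 𝕏, Pbar * Pbar = Pbar ∧
      (∀ t s : ℤ, s ≤ t →
        Tendsto (fun k => X (t + θ k) * P * Xinv (s + θ k)) atTop
          (𝓝 (Xbar t * Pbar * Xbarinv s))) ∧
      (∀ t s : ℤ, t ≤ s →
        Tendsto (fun k => X (t + θ k) * (1 - P) * Xinv (s + θ k)) atTop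
          (𝓝 (Xbar t * (1 - Pbar) * Xbarinv s))) ∧
      (∀ s t : ℤ, s ≤ t → ‖Xbar t * Pbar * Xbarinv s‖ ≤ β₁ * (1 + α₁) ^ (s - t)) ∧
      (∀ s t : ℤ, t ≤ s → ‖Xbar t * (1 - Pbar) * Xbarinv s‖ ≤ β₂ * (1 + α₂) ^ (t - s)) ∧
      (∀ t s : ℤ, s ≤ t →
        Tendsto (fun k => Xbar (t - θ k) * Pbar * Xbarinv (s - θ k)) atTop
          (𝓝 (X t * P * Xinv s))) ∧
      (∀ t s : ℤ, t ≤ s →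
        Tendsto (fun k => Xbar (t - θ k) * (1 - Pbar) * Xbarinv (s - θ k)) atTop
          (𝓝 (X t * (1 - P) * Xinv s))) := by
  have h : Dich A X Xinv P α₁ α₂ β₁ β₂ :=
    ⟨hX, hXinv, hXinv', hP, hα₁, hα₂, hβ₁, hβ₂, hd₁, hd₂⟩
  obtain ⟨Q, g, g1, g2⟩ := h.limit hXbarinv hXbarinv' hXbar hAfwd
  obtain ⟨P', f, f1, f2⟩ := g.limit (θ := fun k => - θ k) hXinv hXinv' hX hAbwd
  obtain rfl := h.unique f
  exact ⟨Q, g.hP, fun t s _ => g1 t s, fun t s _ => g2 t s, g.hd₁, g.hd₂,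
    fun t s _ => f1 t s, fun t s _ => f2 t s⟩
end

section
/- If u : ℤ → 𝒳 is discrete almost automorphic and g : ℤ → ℤ is discrete almost automorphic (as a ℤ-valued function), then the function t ↦ u(t − g(t)) is discrete almost automorphic. -/
open Filter Topology

/-- A function `f : ℤ → 𝕏` is discrete almost automorphic if for every sequence of
integers there exist a subsequence `(k_n)` and a function `f̄` such that
`f(t + k_n) → f̄(t)` and `f̄(t − k_n) → f(t)` pointwise in `t`. -/
def DiscreteAlmostAutomorphic {𝕏 : Type*} [TopologicalSpace 𝕏] (f : ℤ → 𝕏) : Prop :=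
  ∀ k' : ℕ → ℤ, ∃ (σ : ℕ → ℕ) (fbar : ℤ → 𝕏), StrictMono σ ∧
    (∀ t : ℤ, Tendsto (fun n => f (t + k' (σ n))) atTop (𝓝 (fbar t))) ∧
    (∀ t : ℤ, Tendsto (fun n => fbar (t - k' (σ n))) atTop (𝓝 (f t)))

/-- If `u : ℤ → 𝕏` and `g : ℤ → ℤ` are discrete almost automorphic,
then `t ↦ u(t − g(t))` is discrete almost automorphic. -/
theorem stmt_8 {𝕏 : Type*} [NormedAddCommGroup 𝕏]
    (u : ℤ → 𝕏) (g : ℤ → ℤ)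
    (hu : DiscreteAlmostAutomorphic u) (hg : DiscreteAlmostAutomorphic g) :
    DiscreteAlmostAutomorphic fun t => u (t - g t) := by
  intro k'
  obtain ⟨σ, ubar, hσ, hu1, hu2⟩ := hu k'
  obtain ⟨τ, gbar, hτ, hg1, hg2⟩ := hg (fun n => k' (σ n))
  refine ⟨fun n => σ (τ n), fun t => ubar (t - gbar t), hσ.comp hτ, fun t => ?_, fun t => ?_⟩
  · have h := (hu1 (t - gbar t)).comp hτ.tendsto_atTop
    refine h.congr' ?_
    have hg := hg1 t
    rw [nhds_discrete, tendsto_pure] at hg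
    filter_upwards [hg] with n hn
    simp only [Function.comp, hn]
    congr 1
    ring
  · have h := (hu2 (t - g t)).comp hτ.tendsto_atTop
    refine h.congr' ?_
    have hg := hg2 t
    rw [nhds_discrete, tendsto_pure] at hg
    filter_upwards [hg] with n hn
    simp only [Function.comp, hn]
    congr 1
    ring
end

section
/- Under assumptions (A1)–(A4), the operator H defined by (Hx)(t) = Q(t, x(t−g(t))) + ∑_{j=-∞}^{t−1} X(t)P X(j+1)⁻¹ Λ(j,x) − ∑_{j=t}^{∞} X(t)(I−P) X(j+1)⁻¹ Λ(j,x), where Λ(j,x) = (A(j)−I)Q(j, x(j−g(j))) + G(j, x(j), x(j−g(j))), maps the space 𝒜(ℝⁿ) of discrete almost automorphic functions ℤ → ℝⁿ into itself: if x ∈ 𝒜(ℝⁿ) then Hx ∈ 𝒜(ℝⁿ). -/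
open Filter Topology

/-- `Λ(j,x) = (A(j) − I) Q(j, x(j − g(j))) + G(j, x(j), x(j − g(j)))`. -/
noncomputable def Lam {n : ℕ} (A : ℤ → (Fin n → ℝ) →L[ℝ] (Fin n → ℝ))
    (g : ℤ → ℤ) (Q : ℤ → (Fin n → ℝ) → Fin n → ℝ)
    (G : ℤ → (Fin n → ℝ) → (Fin n → ℝ) → Fin n → ℝ)
    (x : ℤ → Fin n → ℝ) (j : ℤ) : Fin n → ℝ :=
  (A j - 1) (Q j (x (j - g j))) + G j (x j) (x (j - g j))

/-- `(Hx)(t) = Q(t, x(t−g(t))) + ∑_{j=-∞}^{t−1} X(t) P X(j+1)⁻¹ Λ(j,x)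
  − ∑_{j=t}^{∞} X(t)(I−P) X(j+1)⁻¹ Λ(j,x)`, the sums being reindexed over `ℕ`
  via `j = t − 1 − m` and `j = t + m` respectively. -/
noncomputable def Hmap {n : ℕ} (A X Xinv : ℤ → (Fin n → ℝ) →L[ℝ] (Fin n → ℝ))
    (P : (Fin n → ℝ) →L[ℝ] (Fin n → ℝ)) (g : ℤ → ℤ)
    (Q : ℤ → (Fin n → ℝ) → Fin n → ℝ)
    (G : ℤ → (Fin n → ℝ) → (Fin n → ℝ) → Fin n → ℝ)
    (x : ℤ → Fin n → ℝ) (t : ℤ) : Fin n → ℝ :=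
  Q t (x (t - g t))
    + (∑' m : ℕ, (X t * P * Xinv (t - (m : ℤ))) (Lam A g Q G x (t - 1 - (m : ℤ))))
    - ∑' m : ℕ, (X t * (1 - P) * Xinv (t + (m : ℤ) + 1)) (Lam A g Q G x (t + (m : ℤ)))

lemma daa_bdd {E : Type*} [NormedAddCommGroup E] {f : ℤ → E}
    (hf : DiscreteAlmostAutomorphic f) : ∃ C : ℝ, ∀ t, ‖f t‖ ≤ C := by
  by_contra! hcon
  choose k hk using fun n : ℕ => hcon n
  obtain ⟨σ, fb, hσ, h1, -⟩ := hf k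
  have h2 := (h1 0).norm
  have h3 : Tendsto (fun n => ‖f (0 + k (σ n))‖) atTop atTop := by
    refine tendsto_atTop_mono (fun n => ?_) (tendsto_natCast_atTop_atTop (R := ℝ))
    rw [zero_add]
    refine le_trans ?_ (hk (σ n)).le
    exact_mod_cast hσ.id_le n
  exact not_tendsto_nhds_of_tendsto_atTop h3 _ h2

lemma daa_prod {E F : Type*} [TopologicalSpace E] [TopologicalSpace F] {f : ℤ → E} {g : ℤ → F}
    (hf : DiscreteAlmostAutomorphic f) (hg : DiscreteAlmostAutomorphic g) :
    DiscreteAlmostAutomorphic (fun t => (f t, g t)) := by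
  intro k
  obtain ⟨σ, fb, hσ, h1, h2⟩ := hf k
  obtain ⟨τ, gb, hτ, h3, h4⟩ := hg (k ∘ σ)
  refine ⟨σ ∘ τ, fun t => (fb t, gb t), hσ.comp hτ, fun t => ?_, fun t => ?_⟩
  · exact ((h1 t).comp hτ.tendsto_atTop).prodMk_nhds (h3 t)
  · exact ((h2 t).comp hτ.tendsto_atTop).prodMk_nhds (h4 t)

lemma daa_cont {E F : Type*} [TopologicalSpace E] [TopologicalSpace F] {f : ℤ → E}
    (hf : DiscreteAlmostAutomorphic f) {φ : E → F} (hφ : Continuous φ) :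
    DiscreteAlmostAutomorphic (fun t => φ (f t)) := by
  intro k
  obtain ⟨σ, fb, hσ, h1, h2⟩ := hf k
  exact ⟨σ, fun t => φ (fb t), hσ, fun t => (hφ.tendsto _).comp (h1 t),
    fun t => (hφ.tendsto _).comp (h2 t)⟩

lemma daa_shift {E : Type*} [TopologicalSpace E] {x : ℤ → E} {g : ℤ → ℤ}
    (hx : DiscreteAlmostAutomorphic x) (hg : DiscreteAlmostAutomorphic g) :
    DiscreteAlmostAutomorphic (fun t => x (t - g t)) := by
  intro k
  obtain ⟨σ, fb, hσ, h1, h2⟩ := hx k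
  obtain ⟨τ, gb, hτ, h3, h4⟩ := hg (k ∘ σ)
  refine ⟨σ ∘ τ, fun t => fb (t - gb t), hσ.comp hτ, fun t => ?_, fun t => ?_⟩
  · have h5 := h3 t
    rw [nhds_discrete, tendsto_pure] at h5
    refine ((h1 (t - gb t)).comp hτ.tendsto_atTop).congr' ?_
    filter_upwards [h5] with n hn
    simp only [Function.comp_apply] at hn ⊢
    rw [hn]
    congr 1
    ring
  · have h5 := h4 t
    rw [nhds_discrete, tendsto_pure] at h5
    refine ((h2 (t - g t)).comp hτ.tendsto_atTop).congr' ?_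
    filter_upwards [h5] with n hn
    simp only [Function.comp_apply] at hn ⊢
    rw [hn]
    congr 1
    ring

lemma seq_cpt {E : Type*} [NormedAddCommGroup E] [ProperSpace E] (F : ℕ → ℤ → E) (C : ℝ)
    (hF : ∀ n t, ‖F n t‖ ≤ C) : ∃ (σ : ℕ → ℕ) (y : ℤ → E), StrictMono σ ∧ (∀ t, ‖y t‖ ≤ C) ∧
      ∀ t, Tendsto (fun n => F (σ n) t) atTop (𝓝 (y t)) := by
  have hc : IsCompact (Set.univ.pi (fun _ : ℤ => Metric.closedBall (0 : E) C)) :=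
    isCompact_univ_pi fun _ => isCompact_closedBall _ _
  obtain ⟨y, hy, σ, hσ, h⟩ := hc.tendsto_subseq (x := F) (fun n t _ => by simpa using hF n t)
  refine ⟨σ, y, hσ, fun t => by simpa using hy t trivial, fun t => ?_⟩
  exact (tendsto_pi_nhds.1 h) t

lemma two_cpt {E : Type*} [NormedAddCommGroup E] [ProperSpace E] (f : ℤ → E) (C : ℝ)
    (hf : ∀ t, ‖f t‖ ≤ C) (k : ℕ → ℤ) : ∃ (σ : ℕ → ℕ) (fb z : ℤ → E), StrictMono σ ∧
      (∀ t, ‖z t‖ ≤ C) ∧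
      (∀ t, Tendsto (fun n => f (t + k (σ n))) atTop (𝓝 (fb t))) ∧
      (∀ t, Tendsto (fun n => fb (t - k (σ n))) atTop (𝓝 (z t))) := by
  obtain ⟨σ, fb, hσ, hb, h1⟩ := seq_cpt (fun n t => f (t + k n)) C (fun n t => hf _)
  obtain ⟨τ, z, hτ, hz, h2⟩ := seq_cpt (fun n t => fb (t - k (σ n))) C (fun n t => hb _)
  exact ⟨σ ∘ τ, fb, z, hσ.comp hτ, hz, fun t => (h1 t).comp hτ.tendsto_atTop, h2⟩

lemma daa_lip {E V : Type*} [NormedAddCommGroup E] [ProperSpace E] [NormedAddCommGroup V]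
    {F : ℤ → V → E} {K : ℝ} (hF : ∀ u, DiscreteAlmostAutomorphic fun t => F t u)
    (hK : 0 ≤ K) (hL : ∀ t u v, ‖F t u - F t v‖ ≤ K * ‖u - v‖)
    {v : ℤ → V} (hv : DiscreteAlmostAutomorphic v) :
    DiscreteAlmostAutomorphic (fun t => F t (v t)) := by
  obtain ⟨C1, hC1⟩ := daa_bdd (hF 0)
  obtain ⟨C2, hC2⟩ := daa_bdd hv
  have hb : ∀ t, ‖F t (v t)‖ ≤ C1 + K * C2 := by
    intro t
    have h1 := hL t (v t) 0
    rw [sub_zero] at h1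
    have h2 : ‖F t (v t)‖ ≤ ‖F t 0‖ + ‖F t (v t) - F t 0‖ := by
      simpa using norm_add_le (F t 0) (F t (v t) - F t 0)
    have := hC1 t
    have := mul_le_mul_of_nonneg_left (hC2 t) hK
    linarith
  intro k
  obtain ⟨σ, vb, hσ, v1, v2⟩ := hv k
  obtain ⟨τ, hbar, z, hτ, -, h1, h2⟩ := two_cpt (fun t => F t (v t)) _ hb (k ∘ σ)
  have key : ∀ t, z t = F t (v t) := by
    intro t
    obtain ⟨ρ, qb, hρ, q1, q2⟩ := hF (v t) (k ∘ σ ∘ τ)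
    have hle : ∀ s, ‖hbar s - qb s‖ ≤ K * ‖vb s - v t‖ := by
      intro s
      refine le_of_tendsto_of_tendsto
        (((h1 s).comp hρ.tendsto_atTop).sub (q1 s)).norm
        (((((v1 s).comp (hτ.comp hρ).tendsto_atTop).sub_const (v t)).norm).const_mul K)
        (Eventually.of_forall fun n => ?_)
      exact hL _ _ _
    have h3 : Tendsto (fun n => K * ‖vb (t - k (σ (τ (ρ n)))) - v t‖) atTop (𝓝 0) := by
      have := ((((v2 t).comp (hτ.comp hρ).tendsto_atTop).sub_const (v t)).norm).const_mul K
      simpa using this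
    have h4 := squeeze_zero_norm (fun n => hle (t - k (σ (τ (ρ n))))) h3
    have h5 := ((h2 t).comp hρ.tendsto_atTop).sub (q2 t)
    exact sub_eq_zero.1 (tendsto_nhds_unique h5 h4)
  refine ⟨σ ∘ τ, hbar, hσ.comp hτ, h1, fun t => ?_⟩
  change Tendsto _ _ (𝓝 (F t (v t)))
  rw [← key t]
  exact h2 t

lemma tendsto_clm_app {n : ℕ} {B : ℕ → (Fin n → ℝ) →L[ℝ] (Fin n → ℝ)} {u : ℕ → Fin n → ℝ}
    {B0 : (Fin n → ℝ) →L[ℝ] (Fin n → ℝ)} {u0 : Fin n → ℝ}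
    (hB : Tendsto B atTop (𝓝 B0)) (hu : Tendsto u atTop (𝓝 u0)) :
    Tendsto (fun m => B m (u m)) atTop (𝓝 (B0 u0)) := by
  have hc : Continuous fun p : ((Fin n → ℝ) →L[ℝ] (Fin n → ℝ)) × (Fin n → ℝ) => p.1 p.2 :=
    continuous_fst.clm_apply continuous_snd
  exact (hc.tendsto (B0, u0)).comp (hB.prodMk_nhds hu)

/-- bounded solutions of a linear recursion with unique bounded solution are a.a. -/
lemma daa_sol {n : ℕ} {A : ℤ → (Fin n → ℝ) →L[ℝ] (Fin n → ℝ)} {L y : ℤ → Fin n → ℝ}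
    (hA : DiscreteAlmostAutomorphic A) (hL : DiscreteAlmostAutomorphic L)
    (hy : ∀ t, y (t + 1) = A t (y t) + L t) (C : ℝ) (hC : ∀ t, ‖y t‖ ≤ C)
    (huniq : ∀ w : ℤ → Fin n → ℝ, (∀ t, w (t + 1) = A t (w t)) →
      (∃ D : ℝ, ∀ t, ‖w t‖ ≤ D) → ∀ t, w t = 0) :
    DiscreteAlmostAutomorphic y := by
  intro k
  obtain ⟨σ, Ab, hσ, a1, a2⟩ := hA k
  obtain ⟨τ, Lb, hτ, l1, l2⟩ := hL (k ∘ σ)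
  obtain ⟨ρ, yb, z, hρ, hz, h1, h2⟩ := two_cpt y C hC (k ∘ σ ∘ τ)
  have hyb : ∀ t, yb (t + 1) = Ab t (yb t) + Lb t := by
    intro t
    have e1 := (tendsto_clm_app ((a1 t).comp (hτ.comp hρ).tendsto_atTop) (h1 t)).add
      ((l1 t).comp hρ.tendsto_atTop)
    refine tendsto_nhds_unique (h1 (t + 1)) (e1.congr fun m => ?_)
    simp only [Function.comp_apply]
    rw [← hy]
    congr 1
    ring
  have hzz : ∀ t, z (t + 1) = A t (z t) + L t := by
    intro t
    have e1 := (tendsto_clm_app ((a2 t).comp (hτ.comp hρ).tendsto_atTop) (h2 t)).add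
      ((l2 t).comp hρ.tendsto_atTop)
    refine tendsto_nhds_unique (h2 (t + 1)) (e1.congr fun m => ?_)
    simp only [Function.comp_apply]
    rw [← hyb]
    congr 1
    ring
  have hzy : ∀ t, z t - y t = 0 := by
    refine huniq (fun t => z t - y t) (fun t => ?_) ⟨C + C, fun t => ?_⟩
    · simp only [hzz, hy, map_sub]
      abel
    · exact (norm_sub_le _ _).trans (add_le_add (hz t) (hC t))
  refine ⟨σ ∘ τ ∘ ρ, yb, hσ.comp (hτ.comp hρ), h1, fun t => ?_⟩
  rw [← sub_eq_zero.1 (hzy t)]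
  exact h2 t

lemma geom_zpow_tendsto {α β D : ℝ} (hα : 0 < α) :
    Tendsto (fun m : ℕ => β * (1 + α) ^ (-(m : ℤ)) * D) atTop (𝓝 0) := by
  have h : Tendsto (fun m : ℕ => ((1 + α)⁻¹) ^ m) atTop (𝓝 0) :=
    tendsto_pow_atTop_nhds_zero_of_lt_one (by positivity) (inv_lt_one_of_one_lt₀ (by linarith))
  have := (h.const_mul β).mul_const D
  simpa [zpow_neg] using this

lemma geom_zpow_summable {α β D : ℝ} (hα : 0 < α) :
    Summable (fun m : ℕ => β * (1 + α) ^ (-(m : ℤ)) * D) := by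
  have h : Summable (fun m : ℕ => ((1 + α)⁻¹) ^ m) :=
    summable_geometric_of_lt_one (by positivity) (inv_lt_one_of_one_lt₀ (by linarith))
  have := (h.mul_left β).mul_right D
  simpa [zpow_neg] using this

lemma dich_uniq {n : ℕ} {A X Xinv : ℤ → (Fin n → ℝ) →L[ℝ] (Fin n → ℝ)}
    (hX : ∀ t : ℤ, X (t + 1) = A t * X t)
    (hXinv : ∀ t : ℤ, X t * Xinv t = 1) (hXinv' : ∀ t : ℤ, Xinv t * X t = 1)
    (P : (Fin n → ℝ) →L[ℝ] (Fin n → ℝ))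
    (α₁ α₂ β₁ β₂ : ℝ) (hα₁ : 0 < α₁) (hα₂ : 0 < α₂) (hβ₁ : 0 < β₁) (hβ₂ : 0 < β₂)
    (hd₁ : ∀ s t : ℤ, s ≤ t → ‖X t * P * Xinv s‖ ≤ β₁ * (1 + α₁) ^ (s - t))
    (hd₂ : ∀ s t : ℤ, t ≤ s → ‖X t * (1 - P) * Xinv s‖ ≤ β₂ * (1 + α₂) ^ (t - s))
    (w : ℤ → Fin n → ℝ) (hw : ∀ t, w (t + 1) = A t (w t)) (D : ℝ) (hD : ∀ t, ‖w t‖ ≤ D)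
    (t : ℤ) : w t = 0 := by
  have hstep : ∀ s, Xinv (s + 1) (w (s + 1)) = Xinv s (w s) := by
    intro s
    have e : w s = X s (Xinv s (w s)) := by
      change w s = (X s * Xinv s) (w s)
      rw [hXinv]; rfl
    have e2 : w (s + 1) = X (s + 1) (Xinv s (w s)) := by
      rw [hw, hX]
      conv_lhs => rw [e]
      rfl
    rw [e2]
    change (Xinv (s + 1) * X (s + 1)) _ = _
    rw [hXinv']; rfl
  have hconst : ∀ s, Xinv s (w s) = Xinv t (w t) := by
    have hup : ∀ (s : ℤ) (m : ℕ), Xinv (s + m) (w (s + m)) = Xinv s (w s) := by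
      intro s m
      induction m with
      | zero => simp
      | succ m ih => 
        rw [← ih, ← hstep (s + m)]
        push_cast
        rw [add_assoc]
    intro s
    rcases le_total s t with h | h
    · obtain ⟨m, hm⟩ := Int.le.dest h
      rw [← hm, hup]
    · obtain ⟨m, hm⟩ := Int.le.dest h
      rw [← hm, hup]
  have z1 : (X t) (P (Xinv t (w t))) = 0 := by
    have hb : ∀ m : ℕ, ‖(X t) (P (Xinv t (w t)))‖ ≤ β₁ * (1 + α₁) ^ (-(m : ℤ)) * D := by
      intro m
      rw [← hconst (t - m)]
      have h1 := hd₁ (t - m) t (by omega)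
      rw [show t - (m : ℤ) - t = -(m : ℤ) by ring] at h1
      exact ((X t * P * Xinv (t - m)).le_opNorm _).trans
        (mul_le_mul h1 (hD _) (norm_nonneg _) (by positivity))
    have := ge_of_tendsto' (geom_zpow_tendsto hα₁) hb
    exact norm_le_zero_iff.1 this
  have z2 : (X t) ((1 - P) (Xinv t (w t))) = 0 := by
    have hb : ∀ m : ℕ, ‖(X t) ((1 - P) (Xinv t (w t)))‖ ≤ β₂ * (1 + α₂) ^ (-(m : ℤ)) * D := by
      intro m
      rw [← hconst (t + m)]
      have h1 := hd₂ (t + m) t (by omega)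
      rw [show t - (t + (m : ℤ)) = -(m : ℤ) by ring] at h1
      exact ((X t * (1 - P) * Xinv (t + m)).le_opNorm _).trans
        (mul_le_mul h1 (hD _) (norm_nonneg _) (by positivity))
    have := ge_of_tendsto' (geom_zpow_tendsto hα₂) hb
    exact norm_le_zero_iff.1 this
  have e : w t = X t (Xinv t (w t)) := by
    change w t = (X t * Xinv t) (w t)
    rw [hXinv]; rfl
  have e3 : Xinv t (w t) = P (Xinv t (w t)) + (1 - P) (Xinv t (w t)) := by
    simp
  rw [e, e3, map_add, z1, z2, add_zero]

/-- Under (A1)–(A4), the operator `H` maps the space of discrete almost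
automorphic functions `ℤ → ℝⁿ` into itself. -/
theorem stmt_9 {n : ℕ}
    (A X Xinv : ℤ → (Fin n → ℝ) →L[ℝ] (Fin n → ℝ)) (t₀ : ℤ)
    (g : ℤ → ℤ) (hg0 : ∀ t : ℤ, 0 ≤ g t)
    (Q : ℤ → (Fin n → ℝ) → Fin n → ℝ)
    (G : ℤ → (Fin n → ℝ) → (Fin n → ℝ) → Fin n → ℝ)
    (E₁ E₂ : ℝ) (hE₁ : 0 < E₁) (hE₂ : 0 < E₂)
    -- (A1)
    (hA_aa : DiscreteAlmostAutomorphic A)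
    (hg_aa : DiscreteAlmostAutomorphic g)
    (hQ_aa : ∀ u : Fin n → ℝ, DiscreteAlmostAutomorphic fun t => Q t u)
    (hG_aa : ∀ u v : Fin n → ℝ, DiscreteAlmostAutomorphic fun t => G t u v)
    -- (A2)
    (hQ_lip : ∀ (t : ℤ) (u v : Fin n → ℝ), ‖Q t u - Q t v‖ ≤ E₁ * ‖u - v‖)
    -- (A3)
    (hG_lip : ∀ (t : ℤ) (u v w z : Fin n → ℝ),
      ‖G t u w - G t v z‖ ≤ E₂ * (‖u - v‖ + ‖w - z‖))
    -- (A4): exponential dichotomy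
    (hX : ∀ t : ℤ, X (t + 1) = A t * X t) (hX0 : X t₀ = 1)
    (hXinv : ∀ t : ℤ, X t * Xinv t = 1) (hXinv' : ∀ t : ℤ, Xinv t * X t = 1)
    (P : (Fin n → ℝ) →L[ℝ] (Fin n → ℝ)) (hP : P * P = P)
    (α₁ α₂ β₁ β₂ : ℝ) (hα₁ : 0 < α₁) (hα₂ : 0 < α₂) (hβ₁ : 0 < β₁) (hβ₂ : 0 < β₂)
    (hd₁ : ∀ s t : ℤ, s ≤ t → ‖X t * P * Xinv s‖ ≤ β₁ * (1 + α₁) ^ (s - t))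
    (hd₂ : ∀ s t : ℤ, t ≤ s → ‖X t * (1 - P) * Xinv s‖ ≤ β₂ * (1 + α₂) ^ (t - s))
    (x : ℤ → Fin n → ℝ) (hx : DiscreteAlmostAutomorphic x) :
    DiscreteAlmostAutomorphic (Hmap A X Xinv P g Q G x) := by
  have hv := daa_shift hx hg_aa
  have hQv : DiscreteAlmostAutomorphic (fun t => Q t (x (t - g t))) :=
    daa_lip hQ_aa hE₁.le hQ_lip hv
  have hGv : DiscreteAlmostAutomorphic (fun t => G t (x t) (x (t - g t))) := by
    refine daa_lip (F := fun t (p : (Fin n → ℝ) × (Fin n → ℝ)) => G t p.1 p.2) (K := E₂ * 2)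
      (fun u => hG_aa u.1 u.2) (by positivity) (fun t u v => ?_) (daa_prod hx hv)
    refine (hG_lip t _ _ _ _).trans ?_
    rw [mul_assoc]
    refine mul_le_mul_of_nonneg_left ?_ hE₂.le
    have h1 := norm_fst_le (u - v)
    have h2 := norm_snd_le (u - v)
    rw [Prod.fst_sub] at h1
    rw [Prod.snd_sub] at h2
    linarith
  have hLam : DiscreteAlmostAutomorphic (Lam A g Q G x) := by
    refine daa_cont (daa_prod (daa_prod hA_aa hQv) hGv)
      (φ := fun p => (p.1.1 - 1) p.1.2 + p.2) ?_
    exact ((continuous_fst.fst.sub continuous_const).clm_apply continuous_fst.snd).add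
      continuous_snd
  generalize hLdef : Lam A g Q G x = L at hLam
  obtain ⟨M, hM⟩ := daa_bdd hLam
  set S1 : ℤ → Fin n → ℝ := fun t => ∑' m : ℕ, (X t * P * Xinv (t - (m : ℤ))) (L (t - 1 - (m : ℤ)))
    with hS1
  set S2 : ℤ → Fin n → ℝ := fun t =>
    ∑' m : ℕ, (X t * (1 - P) * Xinv (t + (m : ℤ) + 1)) (L (t + (m : ℤ))) with hS2
  have b1 : ∀ (t : ℤ) (m : ℕ), ‖(X t * P * Xinv (t - (m : ℤ))) (L (t - 1 - (m : ℤ)))‖ ≤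
      β₁ * (1 + α₁) ^ (-(m : ℤ)) * M := by
    intro t m
    have h1 := hd₁ (t - m) t (by omega)
    rw [show t - (m : ℤ) - t = -(m : ℤ) by ring] at h1
    exact ((X t * P * Xinv (t - m)).le_opNorm _).trans
      (mul_le_mul h1 (hM _) (norm_nonneg _) (by positivity))
  have b2 : ∀ (t : ℤ) (m : ℕ), ‖(X t * (1 - P) * Xinv (t + (m : ℤ) + 1)) (L (t + (m : ℤ)))‖ ≤
      β₂ * (1 + α₂) ^ (-(m : ℤ)) * M := by
    intro t m
    have h1 := hd₂ (t + m + 1) t (by omega)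
    have h2 : β₂ * (1 + α₂) ^ (t - (t + (m : ℤ) + 1)) ≤ β₂ * (1 + α₂) ^ (-(m : ℤ)) := by
      refine mul_le_mul_of_nonneg_left ?_ hβ₂.le
      exact zpow_le_zpow_right₀ (by linarith) (by omega)
    exact ((X t * (1 - P) * Xinv (t + m + 1)).le_opNorm _).trans
      (mul_le_mul (h1.trans h2) (hM _) (norm_nonneg _) (by positivity))
  have s1 : ∀ t : ℤ, Summable fun m : ℕ =>
      (X t * P * Xinv (t - (m : ℤ))) (L (t - 1 - (m : ℤ))) :=
    fun t => Summable.of_norm_bounded (geom_zpow_summable hα₁) (b1 t)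
  have s2 : ∀ t : ℤ, Summable fun m : ℕ =>
      (X t * (1 - P) * Xinv (t + (m : ℤ) + 1)) (L (t + (m : ℤ))) :=
    fun t => Summable.of_norm_bounded (geom_zpow_summable hα₂) (b2 t)
  have r1 : ∀ t, S1 (t + 1) = (X (t + 1) * P * Xinv (t + 1)) (L t) + A t (S1 t) := by
    intro t
    simp only [hS1]
    rw [(s1 (t + 1)).tsum_eq_zero_add, (A t).map_tsum (s1 t)]
    congr 1
    · simp
    · refine tsum_congr fun m => ?_
      rw [hX]
      push_cast
      rw [show t + 1 - ((m : ℤ) + 1) = t - m by ring,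
        show t + 1 - 1 - ((m : ℤ) + 1) = t - 1 - m by ring]
      rfl
  have r2 : ∀ t, A t (S2 t) = (X (t + 1) * (1 - P) * Xinv (t + 1)) (L t) + S2 (t + 1) := by
    intro t
    simp only [hS2]
    rw [(s2 t).tsum_eq_zero_add, map_add, (A t).map_tsum ((summable_nat_add_iff 1).2 (s2 t))]
    congr 1
    · rw [hX]
      simp
    · refine tsum_congr fun m => ?_
      rw [hX]
      push_cast
      rw [show t + 1 + (m : ℤ) = t + (m + 1) by ring]
      rfl
  have hy : DiscreteAlmostAutomorphic (fun t => S1 t - S2 t) := by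
    refine daa_sol hA_aa hLam (fun t => ?_)
      ((∑' m : ℕ, β₁ * (1 + α₁) ^ (-(m : ℤ)) * M) + ∑' m : ℕ, β₂ * (1 + α₂) ^ (-(m : ℤ)) * M)
      (fun t => ?_) (fun w hw ⟨D, hD⟩ t => dich_uniq hX hXinv hXinv' P α₁ α₂ β₁ β₂ hα₁ hα₂
        hβ₁ hβ₂ hd₁ hd₂ w hw D hD t)
    · have e : (X (t + 1) * P * Xinv (t + 1)) (L t) + (X (t + 1) * (1 - P) * Xinv (t + 1)) (L t)
          = L t := by
        rw [← _root_.add_apply, ← add_mul, ← mul_add, add_sub_cancel, mul_one, hXinv]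
        rfl
      simp only [map_sub, r1, r2]
      nth_rewrite 3 [← e]
      abel
    · exact (norm_sub_le _ _).trans (add_le_add
        (tsum_of_norm_bounded (geom_zpow_summable hα₁).hasSum (b1 t))
        (tsum_of_norm_bounded (geom_zpow_summable hα₂).hasSum (b2 t)))
  have hfin := daa_cont (daa_prod hQv hy) (φ := fun p => p.1 + p.2)
    (continuous_fst.add continuous_snd)
  convert hfin using 2 with t
  simp only [Hmap, hLdef, hS1, hS2]
  rw [add_sub_assoc]
end

section
/- Assume (A2)–(A4). Then for all ζ, ψ ∈ 𝒜(ℝⁿ), the operator H₂ defined by (H₂x)(t) = ∑_{j=-∞}^{t−1} X(t)P X(j+1)⁻¹ Λ(j,x) − ∑_{j=t}^{∞} X(t)(I−P) X(j+1)⁻¹ Λ(j,x), with Λ(j,x) = (A(j)−I)Q(j, x(j−g(j))) + G(j, x(j), x(j−g(j))), satisfies the Lipschitz estimate ‖H₂ζ − H₂ψ‖_∞ ≤ [(‖A‖+1)E₁ + 2E₂]·‖ζ − ψ‖_∞·(β₁(1+α₁)/α₁ + β₂/α₂), where ‖A‖ = sup_{t∈ℤ} |A(t)| with |A(t)| the maximum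 absolute row sum of A(t). In particular H₂ : 𝒜(ℝⁿ) → 𝒜(ℝⁿ) is continuous. -/
open Filter Topology

/-- `(H₂x)(t) = ∑_{j=-∞}^{t−1} X(t) P X(j+1)⁻¹ Λ(j,x) − ∑_{j=t}^{∞} X(t)(I−P) X(j+1)⁻¹ Λ(j,x)`,
the sums being reindexed over `ℕ` via `j = t − 1 − m` and `j = t + m` respectively. -/
noncomputable def H2map {n : ℕ} (A X Xinv : ℤ → (Fin n → ℝ) →L[ℝ] (Fin n → ℝ))
    (P : (Fin n → ℝ) →L[ℝ] (Fin n → ℝ)) (g : ℤ → ℤ)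
    (Q : ℤ → (Fin n → ℝ) → Fin n → ℝ)
    (G : ℤ → (Fin n → ℝ) → (Fin n → ℝ) → Fin n → ℝ)
    (x : ℤ → Fin n → ℝ) (t : ℤ) : Fin n → ℝ :=
  (∑' m : ℕ, (X t * P * Xinv (t - (m : ℤ))) (Lam A g Q G x (t - 1 - (m : ℤ))))
    - ∑' m : ℕ, (X t * (1 - P) * Xinv (t + (m : ℤ) + 1)) (Lam A g Q G x (t + (m : ℤ)))

/-- Termwise-dominated differences of series; if one series diverges, so does the other and both
`tsum`s vanish. -/
theorem norm_tsum_sub_tsum_le_aux {E : Type*} [NormedAddCommGroup E] [CompleteSpace E]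
    (f g : ℕ → E) (u : ℕ → ℝ) (a : ℝ) (hu : HasSum u a) (h : ∀ m, ‖f m - g m‖ ≤ u m) :
    ‖(∑' m, f m) - ∑' m, g m‖ ≤ a := by
  have hs : Summable (fun m => f m - g m) := Summable.of_norm_bounded hu.summable h
  by_cases hg : Summable g
  · have hf : Summable f := by simpa using hs.add hg
    rw [← hf.tsum_sub hg]
    exact tsum_of_norm_bounded hu h
  · have hf : ¬ Summable f := fun hf => hg (by simpa using hf.sub hs)
    rw [tsum_eq_zero_of_not_summable hf, tsum_eq_zero_of_not_summable hg, sub_zero, norm_zero]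
    exact hu.nonneg fun m => (norm_nonneg _).trans (h m)

theorem hasSum_geom_aux (α : ℝ) (hα : 0 < α) :
    HasSum (fun m : ℕ => (1 + α) ^ (-(m : ℤ))) ((1 + α) / α) := by
  have h1 : (1 + α)⁻¹ < 1 := inv_lt_one_of_one_lt₀ (by linarith)
  have h := hasSum_geometric_of_lt_one (by positivity : 0 ≤ (1 + α)⁻¹) h1
  have e : (1 - (1 + α)⁻¹)⁻¹ = (1 + α) / α := by
    have : 1 - (1 + α)⁻¹ = α / (1 + α) := by field_simp; ring
    rw [this, inv_div]
  rw [e] at h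
  simpa [zpow_neg, inv_pow] using h

/-- Under (A2)–(A4), the operator `H₂` satisfies the Lipschitz estimate
`‖H₂ζ − H₂ψ‖_∞ ≤ [(‖A‖+1)E₁ + 2E₂]·‖ζ − ψ‖_∞·(β₁(1+α₁)/α₁ + β₂/α₂)`, where
`‖A‖ = sup_t ‖A(t)‖`; in particular `H₂ : 𝒜(ℝⁿ) → 𝒜(ℝⁿ)` is continuous. -/
theorem stmt_11 {n : ℕ}
    (A X Xinv : ℤ → (Fin n → ℝ) →L[ℝ] (Fin n → ℝ)) (t₀ : ℤ)
    (hAbdd : BddAbove (Set.range fun t : ℤ => ‖A t‖))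
    (g : ℤ → ℤ) (hg0 : ∀ t : ℤ, 0 ≤ g t)
    (Q : ℤ → (Fin n → ℝ) → Fin n → ℝ)
    (G : ℤ → (Fin n → ℝ) → (Fin n → ℝ) → Fin n → ℝ)
    (E₁ E₂ : ℝ) (hE₁ : 0 < E₁) (hE₂ : 0 < E₂)
    -- (A2)
    (hQ_lip : ∀ (t : ℤ) (u v : Fin n → ℝ), ‖Q t u - Q t v‖ ≤ E₁ * ‖u - v‖)
    -- (A3)
    (hG_lip : ∀ (t : ℤ) (u v w z : Fin n → ℝ),
      ‖G t u w - G t v z‖ ≤ E₂ * (‖u - v‖ + ‖w - z‖))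
    -- (A4): exponential dichotomy
    (hX : ∀ t : ℤ, X (t + 1) = A t * X t) (hX0 : X t₀ = 1)
    (hXinv : ∀ t : ℤ, X t * Xinv t = 1) (hXinv' : ∀ t : ℤ, Xinv t * X t = 1)
    (P : (Fin n → ℝ) →L[ℝ] (Fin n → ℝ)) (hP : P * P = P)
    (α₁ α₂ β₁ β₂ : ℝ) (hα₁ : 0 < α₁) (hα₂ : 0 < α₂) (hβ₁ : 0 < β₁) (hβ₂ : 0 < β₂)
    (hd₁ : ∀ s t : ℤ, s ≤ t → ‖X t * P * Xinv s‖ ≤ β₁ * (1 + α₁) ^ (s - t))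
    (hd₂ : ∀ s t : ℤ, t ≤ s → ‖X t * (1 - P) * Xinv s‖ ≤ β₂ * (1 + α₂) ^ (t - s))
    (ζ ψ : ℤ → Fin n → ℝ)
    (hζ : DiscreteAlmostAutomorphic ζ) (hψ : DiscreteAlmostAutomorphic ψ)
    (C : ℝ) (hC : ∀ s : ℤ, ‖ζ s - ψ s‖ ≤ C) :
    ∀ t : ℤ, ‖H2map A X Xinv P g Q G ζ t - H2map A X Xinv P g Q G ψ t‖ ≤
      (((⨆ s : ℤ, ‖A s‖) + 1) * E₁ + 2 * E₂) * C *
        (β₁ * (1 + α₁) / α₁ + β₂ / α₂) := by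
  intro t
  set L := ((⨆ s : ℤ, ‖A s‖) + 1) * E₁ + 2 * E₂ with hL
  have hC0 : 0 ≤ C := (norm_nonneg _).trans (hC 0)
  have hLam : ∀ j, ‖Lam A g Q G ζ j - Lam A g Q G ψ j‖ ≤ L * C := by
    intro j
    have hA : ‖A j - 1‖ ≤ (⨆ s : ℤ, ‖A s‖) + 1 :=
      (norm_sub_le _ _).trans (add_le_add (le_ciSup hAbdd j) ContinuousLinearMap.norm_id_le)
    have hA0 : 0 ≤ (⨆ s : ℤ, ‖A s‖) + 1 := (norm_nonneg _).trans hA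
    have e : Lam A g Q G ζ j - Lam A g Q G ψ j =
        (A j - 1) (Q j (ζ (j - g j)) - Q j (ψ (j - g j))) +
        (G j (ζ j) (ζ (j - g j)) - G j (ψ j) (ψ (j - g j))) := by
      rw [map_sub]; unfold Lam; abel
    rw [e]
    have h1 : ‖(A j - 1) (Q j (ζ (j - g j)) - Q j (ψ (j - g j)))‖ ≤
        ((⨆ s : ℤ, ‖A s‖) + 1) * (E₁ * C) := by
      refine ((A j - 1).le_opNorm _).trans (mul_le_mul hA ?_ (norm_nonneg _) hA0)
      exact (hQ_lip _ _ _).trans (mul_le_mul_of_nonneg_left (hC _) hE₁.le)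
    have h2 : ‖G j (ζ j) (ζ (j - g j)) - G j (ψ j) (ψ (j - g j))‖ ≤ E₂ * (C + C) :=
      (hG_lip _ _ _ _ _).trans
        (mul_le_mul_of_nonneg_left (add_le_add (hC _) (hC _)) hE₂.le)
    refine (norm_add_le _ _).trans ((add_le_add h1 h2).trans (le_of_eq ?_))
    rw [hL]; ring
  have hLC : 0 ≤ L * C := (norm_nonneg _).trans (hLam 0)
  have key1 : ‖(∑' m : ℕ, (X t * P * Xinv (t - (m : ℤ))) (Lam A g Q G ζ (t - 1 - (m : ℤ)))) -
      ∑' m : ℕ, (X t * P * Xinv (t - (m : ℤ))) (Lam A g Q G ψ (t - 1 - (m : ℤ)))‖ ≤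
      L * C * β₁ * ((1 + α₁) / α₁) := by
    refine norm_tsum_sub_tsum_le_aux _ _ _ _ ((hasSum_geom_aux α₁ hα₁).mul_left (L * C * β₁)) ?_
    intro m
    rw [← map_sub]
    have hb := hd₁ (t - m) t (by omega)
    rw [show t - (m : ℤ) - t = -(m : ℤ) by ring] at hb
    refine (ContinuousLinearMap.le_opNorm _ _).trans
      ((mul_le_mul hb (hLam _) (norm_nonneg _) (by positivity)).trans (le_of_eq (by ring)))
  have key2 : ‖(∑' m : ℕ, (X t * (1 - P) * Xinv (t + (m : ℤ) + 1))
        (Lam A g Q G ζ (t + (m : ℤ)))) -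
      ∑' m : ℕ, (X t * (1 - P) * Xinv (t + (m : ℤ) + 1)) (Lam A g Q G ψ (t + (m : ℤ)))‖ ≤
      L * C * β₂ * (1 + α₂)⁻¹ * ((1 + α₂) / α₂) := by
    refine norm_tsum_sub_tsum_le_aux _ _ _ _
      ((hasSum_geom_aux α₂ hα₂).mul_left (L * C * β₂ * (1 + α₂)⁻¹)) ?_
    intro m
    rw [← map_sub]
    have hb := hd₂ (t + m + 1) t (by omega)
    rw [show t - (t + (m : ℤ) + 1) = -(m : ℤ) + -1 by ring,
      zpow_add₀ (by positivity : (1 + α₂) ≠ 0), zpow_neg_one] at hb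
    refine (ContinuousLinearMap.le_opNorm _ _).trans
      ((mul_le_mul hb (hLam _) (norm_nonneg _) (by positivity)).trans (le_of_eq (by ring)))
  unfold H2map
  rw [sub_sub_sub_comm]
  refine (norm_sub_le _ _).trans ((add_le_add key1 key2).trans (le_of_eq ?_))
  field_simp
end

section
/- Assume the homogeneous system x(t+1) = A(t)x(t) admits an exponential dichotomy with projection P and constants α₁, α₂, β₁, β₂, and let f : ℤ → ℝⁿ be a bounded function. Then the function y(t) = ∑_{j=-∞}^{t−1} X(t)P X(j+1)⁻¹ f(j) − ∑_{j=t}^{∞} X(t)(I−P) X(j+1)⁻¹ f(j) is well defined (both series converge absolutely) and satisfies sup_{t∈ℤ} ‖y(t)‖ ≤ (sup_{t∈ℤ} ‖f(t)‖)·[β₁(1+α₁)/α₁ + β₂/α₂]. -/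
/-- Under an exponential dichotomy with projection `P` and constants
`α₁, α₂, β₁, β₂`, for any bounded `f : ℤ → ℝⁿ` the function
`y(t) = ∑_{j=-∞}^{t−1} X(t) P X(j+1)⁻¹ f(j) − ∑_{j=t}^{∞} X(t)(I−P) X(j+1)⁻¹ f(j)`
is well defined (both series converge absolutely) and satisfies
`sup_t ‖y(t)‖ ≤ (sup_t ‖f(t)‖)·[β₁(1+α₁)/α₁ + β₂/α₂]`. The sums are reindexed over `ℕ`
via `j = t − 1 − m` and `j = t + m` respectively. -/
theorem stmt_12 {n : ℕ}
    (A X Xinv : ℤ → (Fin n → ℝ) →L[ℝ] (Fin n → ℝ)) (t₀ : ℤ)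
    (hX : ∀ t : ℤ, X (t + 1) = A t * X t) (hX0 : X t₀ = 1)
    (hXinv : ∀ t : ℤ, X t * Xinv t = 1) (hXinv' : ∀ t : ℤ, Xinv t * X t = 1)
    (P : (Fin n → ℝ) →L[ℝ] (Fin n → ℝ)) (hP : P * P = P)
    (α₁ α₂ β₁ β₂ : ℝ) (hα₁ : 0 < α₁) (hα₂ : 0 < α₂) (hβ₁ : 0 < β₁) (hβ₂ : 0 < β₂)
    (hd₁ : ∀ s t : ℤ, s ≤ t → ‖X t * P * Xinv s‖ ≤ β₁ * (1 + α₁) ^ (s - t))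
    (hd₂ : ∀ s t : ℤ, t ≤ s → ‖X t * (1 - P) * Xinv s‖ ≤ β₂ * (1 + α₂) ^ (t - s))
    (f : ℤ → Fin n → ℝ) (hf : BddAbove (Set.range fun t : ℤ => ‖f t‖)) :
    (∀ t : ℤ, Summable fun m : ℕ =>
      ‖(X t * P * Xinv (t - (m : ℤ))) (f (t - 1 - (m : ℤ)))‖) ∧
    (∀ t : ℤ, Summable fun m : ℕ =>
      ‖(X t * (1 - P) * Xinv (t + (m : ℤ) + 1)) (f (t + (m : ℤ)))‖) ∧
    ∀ t : ℤ,
      ‖(∑' m : ℕ, (X t * P * Xinv (t - (m : ℤ))) (f (t - 1 - (m : ℤ))))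
          - ∑' m : ℕ, (X t * (1 - P) * Xinv (t + (m : ℤ) + 1)) (f (t + (m : ℤ)))‖
        ≤ (⨆ s : ℤ, ‖f s‖) * (β₁ * (1 + α₁) / α₁ + β₂ / α₂) := by
  have hM : ∀ s, ‖f s‖ ≤ ⨆ s : ℤ, ‖f s‖ := fun s => le_ciSup hf s
  set M := ⨆ s : ℤ, ‖f s‖ with hMdef
  have geo : ∀ α : ℝ, 0 < α → HasSum (fun m : ℕ => ((1 + α)⁻¹) ^ m) ((1 + α) / α) := by
    intro α hα
    have h := hasSum_geometric_of_lt_one (r := (1 + α)⁻¹) (by positivity)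
      (inv_lt_one_of_one_lt₀ (by linarith))
    have e : (1 - (1 + α)⁻¹)⁻¹ = (1 + α) / α := by
      have h1 : (1 + α) ≠ 0 := by positivity
      have h2 : 1 - (1 + α)⁻¹ = α / (1 + α) := by
        field_simp
        ring
      rw [h2, inv_div]
    rwa [e] at h
  have b₁ : ∀ (t : ℤ) (m : ℕ), ‖(X t * P * Xinv (t - (m : ℤ))) (f (t - 1 - (m : ℤ)))‖
      ≤ (M * β₁) * ((1 + α₁)⁻¹) ^ m := by
    intro t m
    have h := hd₁ (t - m) t (by omega)
    have e : (1 + α₁) ^ (t - (m : ℤ) - t) = ((1 + α₁)⁻¹) ^ m := by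
      rw [show t - (m : ℤ) - t = -(m : ℤ) by ring, zpow_neg, zpow_natCast, inv_pow]
    rw [e] at h
    calc _ ≤ _ := ContinuousLinearMap.le_opNorm _ _
      _ ≤ (β₁ * ((1 + α₁)⁻¹) ^ m) * M :=
        mul_le_mul h (hM _) (norm_nonneg _) (by positivity)
      _ = _ := by ring
  have b₂ : ∀ (t : ℤ) (m : ℕ),
      ‖(X t * (1 - P) * Xinv (t + (m : ℤ) + 1)) (f (t + (m : ℤ)))‖
      ≤ (M * β₂ * (1 + α₂)⁻¹) * ((1 + α₂)⁻¹) ^ m := by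
    intro t m
    have h := hd₂ (t + m + 1) t (by omega)
    have e : (1 + α₂) ^ (t - (t + (m : ℤ) + 1)) = ((1 + α₂)⁻¹) ^ (m + 1) := by
      rw [show t - (t + (m : ℤ) + 1) = -((m + 1 : ℕ) : ℤ) by push_cast; ring, zpow_neg,
        zpow_natCast, inv_pow]
    rw [e] at h
    calc _ ≤ _ := ContinuousLinearMap.le_opNorm _ _
      _ ≤ (β₂ * ((1 + α₂)⁻¹) ^ (m + 1)) * M :=
        mul_le_mul h (hM _) (norm_nonneg _) (by positivity)
      _ = _ := by ring
  have g₁ := (geo α₁ hα₁).mul_left (M * β₁)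
  have g₂ := (geo α₂ hα₂).mul_left (M * β₂ * (1 + α₂)⁻¹)
  refine ⟨fun t => Summable.of_nonneg_of_le (fun _ => norm_nonneg _) (b₁ t) g₁.summable,
    fun t => Summable.of_nonneg_of_le (fun _ => norm_nonneg _) (b₂ t) g₂.summable, fun t => ?_⟩
  refine (norm_sub_le _ _).trans ((add_le_add (tsum_of_norm_bounded g₁ (b₁ t))
    (tsum_of_norm_bounded g₂ (b₂ t))).trans (le_of_eq ?_))
  have h1 : (1 + α₂) ≠ 0 := by positivity
  field_simp
end

section
/- Assume (A1)–(A4), with Lipschitz constant E₁ ∈ (0,1), and set a = sup_{t∈ℤ}‖G(t,0,0)‖ and b = sup_{t∈ℤ}‖Q(t,0)‖. Suppose M₀ > 0 satisfies E₁M₀ + b + [(‖A‖+1)(E₁M₀ + b) + 2E₂M₀ + a]·[β₁(1+α₁)/α₁ + β₂/α₂] ≤ M₀, where ‖A‖ = sup_{t∈ℤ}|A(t)|. Then there exists a discrete almost automorphic function x : ℤ → ℝⁿ with sup_{t∈ℤ}‖x(t)‖ ≤ M₀ satisfying, for every t ∈ ℤ, x(t) = Q(t, x(t−g(t))) + ∑_{j=-∞}^{t−1}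 X(t)P X(j+1)⁻¹ Λ(j,x) − ∑_{j=t}^{∞} X(t)(I−P) X(j+1)⁻¹ Λ(j,x), where Λ(j,x) = (A(j)−I)Q(j, x(j−g(j))) + G(j, x(j), x(j−g(j))); i.e., the neutral system x(t+1) = A(t)x(t) + ΔQ(t, x(t−g(t))) + G(t, x(t), x(t−g(t))) has an almost automorphic solution in the ball Π_{M₀} = {x ∈ 𝒜(ℝⁿ) : ‖x‖_∞ ≤ M₀}. -/
open Filter Topology

/-! ### Almost automorphic functions -/

theorem aa_back {Y : Type*} [TopologicalSpace Y] [T2Space Y] {f fb : ℤ → Y}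
    (hf : DiscreteAlmostAutomorphic f) (k : ℕ → ℤ)
    (hk : ∀ t : ℤ, Tendsto (fun n => f (t + k n)) atTop (𝓝 (fb t))) (t : ℤ) :
    Tendsto (fun n => fb (t - k n)) atTop (𝓝 (f t)) := by
  apply tendsto_of_subseq_tendsto
  intro ns hns
  obtain ⟨σ, fb', hσ, h1, h2⟩ := hf (fun n => k (ns n))
  have e : fb' = fb := by
    funext s
    exact tendsto_nhds_unique (h1 s) ((hk s).comp (hns.comp hσ.tendsto_atTop))
  subst e
  exact ⟨σ, h2 t⟩

theorem aa_compact {Y : Type*} [PseudoMetricSpace Y] [ProperSpace Y] {f : ℤ → Y}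
    (hf : DiscreteAlmostAutomorphic f) : ∃ K : Set Y, IsCompact K ∧ ∀ t, f t ∈ K := by
  by_cases h : ∃ C : ℝ, ∀ t, dist (f t) (f 0) ≤ C
  · obtain ⟨C, hC⟩ := h
    exact ⟨Metric.closedBall (f 0) C, isCompact_closedBall _ _, fun t => hC t⟩
  · exfalso
    push Not at h
    choose k hk using fun n : ℕ => h (n : ℝ)
    obtain ⟨σ, fb, hσ, h1, -⟩ := hf k
    have h2 := (h1 0).dist (tendsto_const_nhds (x := f 0))
    have h3 : Tendsto (fun n => dist (f (0 + k (σ n))) (f 0)) atTop atTop := by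
      apply tendsto_atTop_mono (f := fun n : ℕ => ((σ n : ℕ) : ℝ))
      · intro n
        rw [zero_add]
        exact (hk (σ n)).le
      · exact tendsto_natCast_atTop_atTop.comp hσ.tendsto_atTop
    exact not_tendsto_nhds_of_tendsto_atTop h3 _ h2

theorem aa_bdd {Y : Type*} [NormedAddCommGroup Y] [ProperSpace Y] {f : ℤ → Y}
    (hf : DiscreteAlmostAutomorphic f) : BddAbove (Set.range fun t => ‖f t‖) := by
  obtain ⟨K, hK, h⟩ := aa_compact hf
  obtain ⟨C, hC⟩ := hK.isBounded.exists_norm_le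
  exact ⟨C, by rintro _ ⟨t, rfl⟩; exact hC _ (h t)⟩

theorem seq_cpt_s13 {Y : Type*} [TopologicalSpace Y] [FirstCountableTopology Y] {K : Set Y}
    (hK : IsCompact K) (f : ℕ → ℤ → Y) (hf : ∀ n t, f n t ∈ K) :
    ∃ (F : ℤ → Y) (σ : ℕ → ℕ), StrictMono σ ∧ (∀ t, F t ∈ K) ∧
      ∀ t, Tendsto (fun n => f (σ n) t) atTop (𝓝 (F t)) := by
  have h := (isCompact_univ_pi (fun _ : ℤ => hK)).isSeqCompact
  obtain ⟨F, hF, σ, hσ, hl⟩ := h (x := f) (fun n t _ => hf n t)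
  exact ⟨F, σ, hσ, fun t => hF t trivial, fun t => (tendsto_pi_nhds.1 hl) t⟩

/-! ### The translation-invariant limit system -/

structure Sys {V : Type*} [NormedAddCommGroup V] [NormedSpace ℝ V] (d : ℕ → V) (E₁ E₂ : ℝ)
    (A : ℤ → V →L[ℝ] V) (g : ℤ → ℤ) (Q : ℤ → ℕ → V) (G : ℤ → ℕ → ℕ → V)
    (x q p : ℤ → V) : Prop where
  eq : ∀ t, x (t + 1) = A t (x t) + (q (t + 1) - q t) + p t
  hq : ∀ t i, ‖q t - Q t i‖ ≤ E₁ * ‖x (t - g t) - d i‖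
  hp : ∀ t i j, ‖p t - G t i j‖ ≤ E₂ * (‖x t - d i‖ + ‖x (t - g t) - d j‖)

theorem Sys.shift {V : Type*} [NormedAddCommGroup V] [NormedSpace ℝ V] {d : ℕ → V} {E₁ E₂ : ℝ}
    {A : ℤ → V →L[ℝ] V} {g : ℤ → ℤ} {Q : ℤ → ℕ → V} {G : ℤ → ℕ → ℕ → V}
    {x q p : ℤ → V} (h : Sys d E₁ E₂ A g Q G x q p) (k : ℤ) :
    Sys d E₁ E₂ (fun t => A (t + k)) (fun t => g (t + k)) (fun t => Q (t + k))
      (fun t => G (t + k)) (fun t => x (t + k)) (fun t => q (t + k)) (fun t => p (t + k)) := by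
  refine ⟨fun t => ?_, fun t i => ?_, fun t i j => ?_⟩
  · have := h.eq (t + k)
    rw [show t + k + 1 = t + 1 + k by ring] at this
    exact this
  · have := h.hq (t + k) i
    rw [show t + k - g (t + k) = t - g (t + k) + k by ring] at this
    exact this
  · have := h.hp (t + k) i j
    rw [show t + k - g (t + k) = t - g (t + k) + k by ring] at this
    exact this

theorem Sys.limit {V : Type*} [NormedAddCommGroup V] [NormedSpace ℝ V] {d : ℕ → V} {E₁ E₂ : ℝ}
    {A : ℤ → V →L[ℝ] V} {g : ℤ → ℤ} {Q : ℤ → ℕ → V} {G : ℤ → ℕ → ℕ → V}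
    {x q p : ℤ → V}
    {A' : ℕ → ℤ → V →L[ℝ] V} {g' : ℕ → ℤ → ℤ} {Q' : ℕ → ℤ → ℕ → V} {G' : ℕ → ℤ → ℕ → ℕ → V}
    {x' q' p' : ℕ → ℤ → V}
    (h : ∀ n, Sys d E₁ E₂ (A' n) (g' n) (Q' n) (G' n) (x' n) (q' n) (p' n))
    (hA : ∀ t, Tendsto (fun n => A' n t) atTop (𝓝 (A t)))
    (hg : ∀ t, Tendsto (fun n => g' n t) atTop (𝓝 (g t)))
    (hQ : ∀ t i, Tendsto (fun n => Q' n t i) atTop (𝓝 (Q t i)))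
    (hG : ∀ t i j, Tendsto (fun n => G' n t i j) atTop (𝓝 (G t i j)))
    (hx : ∀ t, Tendsto (fun n => x' n t) atTop (𝓝 (x t)))
    (hq : ∀ t, Tendsto (fun n => q' n t) atTop (𝓝 (q t)))
    (hp : ∀ t, Tendsto (fun n => p' n t) atTop (𝓝 (p t))) :
    Sys d E₁ E₂ A g Q G x q p := by
  have hxg : ∀ t, Tendsto (fun n => x' n (t - g' n t)) atTop (𝓝 (x (t - g t))) := by
    intro t
    have h1 : ∀ᶠ n in atTop, g' n t = g t := by
      have := hg t
      rw [nhds_discrete] at this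
      exact tendsto_pure.1 this
    refine (hx (t - g t)).congr' ?_
    filter_upwards [h1] with n hn
    rw [hn]
  refine ⟨fun t => ?_, fun t i => ?_, fun t i j => ?_⟩
  · refine tendsto_nhds_unique (hx (t + 1)) ?_
    have h0 : Tendsto (fun n => A' n t (x' n t)) atTop (𝓝 (A t (x t))) :=
      (isBoundedBilinearMap_apply.continuous.tendsto (A t, x t)).comp ((hA t).prodMk_nhds (hx t))
    have h2 := (h0.add ((hq (t + 1)).sub (hq t))).add (hp t)
    refine h2.congr fun n => ?_
    exact ((h n).eq t).symm
  · exact le_of_tendsto_of_tendsto' ((hq t).sub (hQ t i)).norm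
      (((hxg t).sub_const (d i)).norm.const_mul E₁) (fun n => (h n).hq t i)
  · exact le_of_tendsto_of_tendsto' ((hp t).sub (hG t i j)).norm
      ((((hx t).sub_const (d i)).norm.add ((hxg t).sub_const (d j)).norm).const_mul E₂)
      (fun n => (h n).hp t i j)

/-- A bounded solution of the difference system which is the unique bounded one is
almost automorphic. -/
theorem aa_of_unique {V : Type*} [NormedAddCommGroup V] [NormedSpace ℝ V]
    [FiniteDimensional ℝ V] {d : ℕ → V} {E₁ E₂ : ℝ}
    {A : ℤ → V →L[ℝ] V} {g : ℤ → ℤ} {Q : ℤ → ℕ → V} {G : ℤ → ℕ → ℕ → V}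
    {x q p : ℤ → V} (h : Sys d E₁ E₂ A g Q G x q p)
    (hA : DiscreteAlmostAutomorphic A) (hg : DiscreteAlmostAutomorphic g)
    (hQ : ∀ i, DiscreteAlmostAutomorphic fun t => Q t i)
    (hG : ∀ i j, DiscreteAlmostAutomorphic fun t => G t i j)
    (C : ℝ) (hx : ∀ t, ‖x t‖ ≤ C) (hq : ∀ t, ‖q t‖ ≤ C) (hp : ∀ t, ‖p t‖ ≤ C)
    (huniq : ∀ w q' p' : ℤ → V, Sys d E₁ E₂ A g Q G w q' p' → (∀ t, ‖w t‖ ≤ C) → w = x) :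
    DiscreteAlmostAutomorphic x := by
  haveI : ProperSpace V := FiniteDimensional.proper ℝ V
  haveI : ProperSpace (V →L[ℝ] V) := FiniteDimensional.proper ℝ _
  intro k'
  obtain ⟨KA, hKA, hKA'⟩ := aa_compact hA
  obtain ⟨Kg, hKg, hKg'⟩ := aa_compact hg
  choose KQ hKQ hKQ' using fun i => aa_compact (hQ i)
  choose KG hKG hKG' using fun i j => aa_compact (hG i j)
  have hB : IsCompact (Metric.closedBall (0 : V) C) := isCompact_closedBall _ _
  have hB3 := hB.prod (hB.prod hB)
  have hKQ2 := isCompact_univ_pi hKQ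
  have hKG2 := isCompact_univ_pi (fun i => isCompact_univ_pi (hKG i))
  have hK := (hKA.prod (hKg.prod (hKQ2.prod hKG2))).prod hB3
  obtain ⟨F, σ, hσ, hF, hl⟩ := seq_cpt_s13 hK
    (fun n t => ((A (t + k' n), g (t + k' n), Q (t + k' n), G (t + k' n)),
      x (t + k' n), q (t + k' n), p (t + k' n)))
    (fun n t => ⟨⟨hKA' _, hKg' _, fun i _ => hKQ' i _, fun i _ j _ => hKG' i j _⟩,
      by simpa using hx _, by simpa using hq _, by simpa using hp _⟩)
  have lA : ∀ t, Tendsto (fun n => A (t + k' (σ n))) atTop (𝓝 (F t).1.1) :=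
    fun t => (hl t).fst_nhds.fst_nhds
  have lg : ∀ t, Tendsto (fun n => g (t + k' (σ n))) atTop (𝓝 (F t).1.2.1) :=
    fun t => (hl t).fst_nhds.snd_nhds.fst_nhds
  have lQ : ∀ t i, Tendsto (fun n => Q (t + k' (σ n)) i) atTop (𝓝 ((F t).1.2.2.1 i)) :=
    fun t i => tendsto_pi_nhds.1 (hl t).fst_nhds.snd_nhds.snd_nhds.fst_nhds i
  have lG : ∀ t i j, Tendsto (fun n => G (t + k' (σ n)) i j) atTop
      (𝓝 ((F t).1.2.2.2 i j)) :=
    fun t i j => tendsto_pi_nhds.1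
      (tendsto_pi_nhds.1 (hl t).fst_nhds.snd_nhds.snd_nhds.snd_nhds i) j
  have lx : ∀ t, Tendsto (fun n => x (t + k' (σ n))) atTop (𝓝 (F t).2.1) :=
    fun t => (hl t).snd_nhds.fst_nhds
  have lq : ∀ t, Tendsto (fun n => q (t + k' (σ n))) atTop (𝓝 (F t).2.2.1) :=
    fun t => (hl t).snd_nhds.snd_nhds.fst_nhds
  have lp : ∀ t, Tendsto (fun n => p (t + k' (σ n))) atTop (𝓝 (F t).2.2.2) :=
    fun t => (hl t).snd_nhds.snd_nhds.snd_nhds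
  have hS := Sys.limit (fun n => h.shift (k' (σ n))) lA lg lQ lG lx lq lp
  refine ⟨σ, fun t => (F t).2.1, hσ, lx, fun t => ?_⟩
  apply tendsto_of_subseq_tendsto
  intro ns hns
  obtain ⟨W, τ, hτ, hW, hlW⟩ := seq_cpt_s13 hB3
    (fun n t => (F (t - k' (σ (ns n)))).2) (fun n t => (hF _).2)
  have hm : Tendsto (fun n => ns (τ n)) atTop atTop := hns.comp hτ.tendsto_atTop
  have hS2 := Sys.limit (A := A) (g := g) (Q := Q) (G := G)
    (x := fun t => (W t).1) (q := fun t => (W t).2.1) (p := fun t => (W t).2.2)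
    (fun n => hS.shift (-k' (σ (ns (τ n)))))
    (fun t => (aa_back hA _ lA t).comp hm)
    (fun t => (aa_back hg _ lg t).comp hm)
    (fun t i => (aa_back (hQ i) _ (fun t => lQ t i) t).comp hm)
    (fun t i j => (aa_back (hG i j) _ (fun t => lG t i j) t).comp hm)
    (fun t => (hlW t).fst_nhds) (fun t => (hlW t).snd_nhds.fst_nhds)
    (fun t => (hlW t).snd_nhds.snd_nhds)
  have hw := huniq _ _ _ hS2 (fun t => by simpa using (hW t).1)
  refine ⟨τ, ?_⟩
  rw [← hw]
  exact (hlW t).fst_nhds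

theorem eq_of_dense {V : Type*} [NormedAddCommGroup V] {d : ℕ → V} (hd : DenseRange d)
    {E : ℝ} {f : V → V} (hf : ∀ u v, ‖f u - f v‖ ≤ E * ‖u - v‖) (hE : 0 < E) {q w : V}
    (h : ∀ i, ‖q - f (d i)‖ ≤ E * ‖w - d i‖) : q = f w := by
  have h2 : ∀ ε > 0, ‖q - f w‖ ≤ 2 * E * ε := by
    intro ε hε
    obtain ⟨i, hi⟩ := Metric.denseRange_iff.1 hd w ε hε
    rw [dist_eq_norm] at hi
    have h3 := h i
    have h4 := hf (d i) w
    rw [norm_sub_rev (d i) w] at h4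
    have h5 := norm_sub_le_norm_sub_add_norm_sub q (f (d i)) (f w)
    nlinarith
  have h3 : ‖q - f w‖ ≤ 0 := by
    apply le_of_forall_pos_le_add
    intro ε hε
    have := h2 (ε / (2 * E)) (by positivity)
    rw [mul_div_cancel₀ _ (by positivity)] at this
    linarith
  exact sub_eq_zero.1 (norm_le_zero_iff.1 h3)

/-! ### Dichotomy -/

structure Dich_s13 {V : Type*} [NormedAddCommGroup V] [NormedSpace ℝ V]
    (A X Xinv : ℤ → V →L[ℝ] V) (P : V →L[ℝ] V) (α₁ α₂ β₁ β₂ : ℝ) : Prop where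
  hX : ∀ t : ℤ, X (t + 1) = A t * X t
  hXinv : ∀ t : ℤ, X t * Xinv t = 1
  hXinv' : ∀ t : ℤ, Xinv t * X t = 1
  hα₁ : 0 < α₁
  hα₂ : 0 < α₂
  hβ₁ : 0 < β₁
  hβ₂ : 0 < β₂
  hd₁ : ∀ s t : ℤ, s ≤ t → ‖X t * P * Xinv s‖ ≤ β₁ * (1 + α₁) ^ (s - t)
  hd₂ : ∀ s t : ℤ, t ≤ s → ‖X t * (1 - P) * Xinv s‖ ≤ β₂ * (1 + α₂) ^ (t - s)

noncomputable def green {V : Type*} [NormedAddCommGroup V] [NormedSpace ℝ V]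
    (X Xinv : ℤ → V →L[ℝ] V) (P : V →L[ℝ] V) (h : ℤ → V) (t : ℤ) : V :=
  (∑' m : ℕ, (X t * P * Xinv (t - (m : ℤ))) (h (t - 1 - (m : ℤ))))
        - ∑' m : ℕ, (X t * (1 - P) * Xinv (t + (m : ℤ) + 1)) (h (t + (m : ℤ)))

theorem geo {α : ℝ} (hα : 0 < α) : HasSum (fun m : ℕ => ((1 + α)⁻¹) ^ m) ((1 + α) / α) := by
  have h1 : (1 + α)⁻¹ < 1 := inv_lt_one_of_one_lt₀ (by linarith)
  have := hasSum_geometric_of_lt_one (by positivity) h1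
  have e : (1 + α) / α = (1 - (1 + α)⁻¹)⁻¹ := by
    have h2 : 1 - (1 + α)⁻¹ = α / (1 + α) := by
      field_simp
      ring
    rw [h2, inv_div]
  rw [e]
  exact this

section
variable {V : Type*} [NormedAddCommGroup V] [NormedSpace ℝ V]
    {A X Xinv : ℤ → V →L[ℝ] V} {P : V →L[ℝ] V} {α₁ α₂ β₁ β₂ : ℝ}

theorem Dich_s13.b1 (D : Dich_s13 A X Xinv P α₁ α₂ β₁ β₂) {h : ℤ → V} {C : ℝ}
    (hC : ∀ t, ‖h t‖ ≤ C) (t : ℤ) (m : ℕ) :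
    ‖(X t * P * Xinv (t - (m : ℤ))) (h (t - 1 - (m : ℤ)))‖ ≤ β₁ * C * ((1 + α₁)⁻¹) ^ m := by
  have h1 := D.hd₁ (t - m) t (by omega)
  have e : (1 + α₁) ^ (t - (m : ℤ) - t) = ((1 + α₁)⁻¹) ^ m := by
    rw [show t - (m : ℤ) - t = -(m : ℤ) by ring, zpow_neg, zpow_natCast, inv_pow]
  rw [e] at h1
  have h2 := ContinuousLinearMap.le_of_opNorm_le_of_le _ h1 (hC (t - 1 - m))
  linarith

theorem Dich_s13.b2 (D : Dich_s13 A X Xinv P α₁ α₂ β₁ β₂) {h : ℤ → V} {C : ℝ}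
    (hC : ∀ t, ‖h t‖ ≤ C) (t : ℤ) (m : ℕ) :
    ‖(X t * (1 - P) * Xinv (t + (m : ℤ) + 1)) (h (t + (m : ℤ)))‖
      ≤ β₂ * C * (1 + α₂)⁻¹ * ((1 + α₂)⁻¹) ^ m := by
  have h1 := D.hd₂ (t + m + 1) t (by omega)
  have e : (1 + α₂) ^ (t - (t + (m : ℤ) + 1)) = ((1 + α₂)⁻¹) ^ (m + 1) := by
    rw [show t - (t + (m : ℤ) + 1) = -((m + 1 : ℕ) : ℤ) by push_cast; ring, zpow_neg,
      zpow_natCast, inv_pow]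
  rw [e] at h1
  have h2 := ContinuousLinearMap.le_of_opNorm_le_of_le _ h1 (hC (t + m))
  rw [pow_succ] at h2
  linarith

theorem Dich_s13.hs1 (D : Dich_s13 A X Xinv P α₁ α₂ β₁ β₂) (C : ℝ) :
    HasSum (fun m : ℕ => β₁ * C * ((1 + α₁)⁻¹) ^ m) (β₁ * (1 + α₁) / α₁ * C) := by
  have e : β₁ * (1 + α₁) / α₁ * C = β₁ * C * ((1 + α₁) / α₁) := by ring
  rw [e]
  exact (geo D.hα₁).mul_left (β₁ * C)

theorem Dich_s13.hs2 (D : Dich_s13 A X Xinv P α₁ α₂ β₁ β₂) (C : ℝ) :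
    HasSum (fun m : ℕ => β₂ * C * (1 + α₂)⁻¹ * ((1 + α₂)⁻¹) ^ m) (β₂ / α₂ * C) := by
  have := D.hα₂
  have e : β₂ / α₂ * C = β₂ * C * (1 + α₂)⁻¹ * ((1 + α₂) / α₂) := by
    field_simp
  rw [e]
  exact (geo D.hα₂).mul_left (β₂ * C * (1 + α₂)⁻¹)

theorem Dich_s13.s1 [CompleteSpace V] (D : Dich_s13 A X Xinv P α₁ α₂ β₁ β₂) {h : ℤ → V} {C : ℝ}
    (hC : ∀ t, ‖h t‖ ≤ C) (t : ℤ) :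
    Summable fun m : ℕ => (X t * P * Xinv (t - (m : ℤ))) (h (t - 1 - (m : ℤ))) :=
  Summable.of_norm_bounded (D.hs1 C).summable (D.b1 hC t)

theorem Dich_s13.s2 [CompleteSpace V] (D : Dich_s13 A X Xinv P α₁ α₂ β₁ β₂) {h : ℤ → V} {C : ℝ}
    (hC : ∀ t, ‖h t‖ ≤ C) (t : ℤ) :
    Summable fun m : ℕ => (X t * (1 - P) * Xinv (t + (m : ℤ) + 1)) (h (t + (m : ℤ))) :=
  Summable.of_norm_bounded (D.hs2 C).summable (D.b2 hC t)

theorem Dich_s13.green_le (D : Dich_s13 A X Xinv P α₁ α₂ β₁ β₂) {h : ℤ → V} {C : ℝ}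
    (hC : ∀ t, ‖h t‖ ≤ C) (t : ℤ) :
    ‖green X Xinv P h t‖ ≤ (β₁ * (1 + α₁) / α₁ + β₂ / α₂) * C := by
  have h1 := tsum_of_norm_bounded (D.hs1 C) (D.b1 hC t)
  have h2 := tsum_of_norm_bounded (D.hs2 C) (D.b2 hC t)
  have h3 := norm_sub_le (∑' m : ℕ, (X t * P * Xinv (t - (m : ℤ))) (h (t - 1 - (m : ℤ))))
    (∑' m : ℕ, (X t * (1 - P) * Xinv (t + (m : ℤ) + 1)) (h (t + (m : ℤ))))
  unfold green
  linarith

theorem Dich_s13.green_sub [CompleteSpace V] (D : Dich_s13 A X Xinv P α₁ α₂ β₁ β₂) {h h' : ℤ → V}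
    {C C' : ℝ} (hC : ∀ t, ‖h t‖ ≤ C) (hC' : ∀ t, ‖h' t‖ ≤ C') (t : ℤ) :
    green X Xinv P h t - green X Xinv P h' t = green X Xinv P (fun t => h t - h' t) t := by
  unfold green
  simp only [map_sub]
  rw [(D.s1 hC t).tsum_sub (D.s1 hC' t), (D.s2 hC t).tsum_sub (D.s2 hC' t)]
  abel

theorem Dich_s13.green_step [CompleteSpace V] (D : Dich_s13 A X Xinv P α₁ α₂ β₁ β₂) {h : ℤ → V}
    {C : ℝ} (hC : ∀ t, ‖h t‖ ≤ C) (t : ℤ) :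
    green X Xinv P h (t + 1) = A t (green X Xinv P h t) + h t := by
  have e1 : (∑' m : ℕ, (X (t + 1) * P * Xinv (t + 1 - (m : ℤ))) (h (t + 1 - 1 - (m : ℤ))))
      = (X (t + 1) * P * Xinv (t + 1)) (h t)
        + A t (∑' m : ℕ, (X t * P * Xinv (t - (m : ℤ))) (h (t - 1 - (m : ℤ)))) := by
    rw [(D.s1 hC (t + 1)).tsum_eq_zero_add, (A t).map_tsum (D.s1 hC t)]
    congr 1
    · simp
    · refine tsum_congr fun m => ?_
      rw [show t + 1 - ((m + 1 : ℕ) : ℤ) = t - m by push_cast; ring,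
        show t + 1 - 1 - ((m + 1 : ℕ) : ℤ) = t - 1 - m by push_cast; ring, D.hX t]
      rfl
  have e2 : A t (∑' m : ℕ, (X t * (1 - P) * Xinv (t + (m : ℤ) + 1)) (h (t + (m : ℤ))))
      = (X (t + 1) * (1 - P) * Xinv (t + 1)) (h t)
        + ∑' m : ℕ, (X (t + 1) * (1 - P) * Xinv (t + 1 + (m : ℤ) + 1)) (h (t + 1 + (m : ℤ))) := by
    rw [(A t).map_tsum (D.s2 hC t), ((D.s2 hC t).mapL (A t)).tsum_eq_zero_add]
    congr 1
    · rw [D.hX t]; simp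
    · refine tsum_congr fun m => ?_
      rw [show t + ((m + 1 : ℕ) : ℤ) = t + 1 + m by push_cast; ring, D.hX t]
      rfl
  have e3 : (X (t + 1) * P * Xinv (t + 1)) (h t) + (X (t + 1) * (1 - P) * Xinv (t + 1)) (h t)
      = h t := by
    rw [← add_apply, ← add_mul, ← mul_add, add_sub_cancel, mul_one, D.hXinv]
    rfl
  unfold green
  rw [e1, map_sub, e2]
  nth_rewrite 3 [← e3]
  abel

theorem Dich_s13.homog (D : Dich_s13 A X Xinv P α₁ α₂ β₁ β₂) {z : ℤ → V} {C : ℝ}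
    (hC : ∀ t, ‖z t‖ ≤ C) (hz : ∀ t, z (t + 1) = A t (z t)) (t : ℤ) : z t = 0 := by
  have hs : ∀ t, Xinv (t + 1) (z (t + 1)) = Xinv t (z t) := by
    intro t
    have e : Xinv (t + 1) * A t = Xinv t := by
      calc Xinv (t + 1) * A t = Xinv (t + 1) * (A t * X t) * Xinv t := by
            rw [mul_assoc, mul_assoc, D.hXinv, mul_one]
        _ = Xinv t := by rw [← D.hX, D.hXinv', one_mul]
    rw [hz, ← e]
    rfl
  have hc : ∀ t, Xinv t (z t) = Xinv 0 (z 0) := by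
    intro t
    induction t using Int.induction_on with
    | zero => rfl
    | succ i ih => rw [hs, ih]
    | pred i ih =>
      rw [← ih, ← hs (-(i : ℤ) - 1), sub_add_cancel]
  have hzt : z t = X t (Xinv t (z t)) := by
    have := D.hXinv t
    calc z t = (X t * Xinv t) (z t) := by rw [this]; rfl
      _ = _ := rfl
  have hα₁ := D.hα₁
  have hα₂ := D.hα₂
  have l1 : X t (P (Xinv 0 (z 0))) = 0 := by
    rw [← norm_le_zero_iff]
    have hb : ∀ m : ℕ, ‖X t (P (Xinv 0 (z 0)))‖ ≤ β₁ * C * ((1 + α₁)⁻¹) ^ m := by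
      intro m
      have := D.b1 (h := fun s => z (s + 1)) (fun s => hC (s + 1)) t m
      rw [show t - 1 - (m : ℤ) + 1 = t - m by ring] at this
      rw [← hc (t - m)]
      exact this
    exact ge_of_tendsto' (D.hs1 C).summable.tendsto_atTop_zero hb
  have l2 : X t ((1 - P) (Xinv 0 (z 0))) = 0 := by
    rw [← norm_le_zero_iff]
    have hb : ∀ m : ℕ, ‖X t ((1 - P) (Xinv 0 (z 0)))‖
        ≤ β₂ * C * (1 + α₂)⁻¹ * ((1 + α₂)⁻¹) ^ m := by
      intro m
      have := D.b2 (h := fun s => z (s + 1)) (fun s => hC (s + 1)) t m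
      rw [← hc (t + m + 1)]
      exact this
    exact ge_of_tendsto' (D.hs2 C).summable.tendsto_atTop_zero hb
  rw [hzt, hc t]
  calc X t (Xinv 0 (z 0)) = X t (P (Xinv 0 (z 0))) + X t ((1 - P) (Xinv 0 (z 0))) := by
        rw [← map_add, ← add_apply, add_sub_cancel]; rfl
    _ = 0 := by rw [l1, l2, add_zero]

theorem Dich_s13.green_unique [CompleteSpace V] (D : Dich_s13 A X Xinv P α₁ α₂ β₁ β₂) {h z : ℤ → V}
    {C C' : ℝ} (hC : ∀ t, ‖h t‖ ≤ C) (hz' : ∀ t, ‖z t‖ ≤ C')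
    (hz : ∀ t, z (t + 1) = A t (z t) + h t) (t : ℤ) : z t = green X Xinv P h t := by
  rw [← sub_eq_zero]
  refine D.homog (z := fun t => z t - green X Xinv P h t)
    (C := C' + (β₁ * (1 + α₁) / α₁ + β₂ / α₂) * C) (fun t => ?_) (fun t => ?_) t
  · exact (norm_sub_le _ _).trans (add_le_add (hz' t) (D.green_le hC t))
  · simp only [hz, D.green_step hC, map_sub]
    abel

end

/-! ### Contraction -/

theorem contr_unique {V : Type*} [NormedAddCommGroup V] (T : (ℤ → V) → ℤ → V) {L : ℝ}
    (hL0 : 0 ≤ L) (hL : L < 1) {C₀ : ℝ} {x y : ℤ → V} (hxy : ∀ t, ‖x t - y t‖ ≤ C₀)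
    (hT : ∀ C, (∀ t, ‖x t - y t‖ ≤ C) → ∀ t, ‖T x t - T y t‖ ≤ L * C)
    (hx : ∀ t, x t = T x t) (hy : ∀ t, y t = T y t) : x = y := by
  have h : ∀ m : ℕ, ∀ t, ‖x t - y t‖ ≤ L ^ m * C₀ := by
    intro m
    induction m with
    | zero => simpa using hxy
    | succ m ih =>
      intro t
      have := hT _ ih t
      rw [← hx, ← hy] at this
      rw [pow_succ]
      linarith
  funext t
  rw [← sub_eq_zero, ← norm_le_zero_iff]
  have l := (tendsto_pow_atTop_nhds_zero_of_lt_one hL0 hL).mul_const C₀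
  rw [zero_mul] at l
  exact ge_of_tendsto' l (fun m => h m t)

theorem contr_exists {V : Type*} [NormedAddCommGroup V] [CompleteSpace V]
    (T : (ℤ → V) → ℤ → V) {L c : ℝ}
    (hL0 : 0 ≤ L) (hL : L < 1)
    (hT : ∀ (x y : ℤ → V) (C B : ℝ), (∀ t, ‖x t‖ ≤ B) → (∀ t, ‖y t‖ ≤ B) →
      (∀ t, ‖x t - y t‖ ≤ C) → ∀ t, ‖T x t - T y t‖ ≤ L * C)
    (hT0 : ∀ t, ‖T 0 t‖ ≤ c) :
    ∃ x : ℤ → V, (∀ t, x t = T x t) ∧ ∀ t, ‖x t‖ ≤ c / (1 - L) := by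
  have hb : ∀ (x : ℤ → V) (B : ℝ), (∀ t, ‖x t‖ ≤ B) → ∀ t, ‖T x t‖ ≤ L * B + c := by
    intro x B hB t
    have h0 : 0 ≤ B := (norm_nonneg _).trans (hB 0)
    have h1 := hT x 0 B B hB (fun t => by simpa using h0) (fun t => by simpa using hB t) t
    have h2 := norm_le_norm_sub_add (T x t) (T 0 t)
    linarith [hT0 t]
  let F : BoundedContinuousFunction ℤ V → BoundedContinuousFunction ℤ V := fun x =>
    BoundedContinuousFunction.ofNormedAddCommGroupDiscrete (T x) (L * ‖x‖ + c)
      (hb x ‖x‖ (fun t => x.norm_coe_le_norm t))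
  have hF : ContractingWith ⟨L, hL0⟩ F := by
    refine ⟨hL, LipschitzWith.of_dist_le_mul fun x y => ?_⟩
    rw [BoundedContinuousFunction.dist_le (by positivity)]
    intro t
    rw [dist_eq_norm]
    refine hT x y (dist x y) (max ‖x‖ ‖y‖)
      (fun t => (x.norm_coe_le_norm t).trans (le_max_left _ _))
      (fun t => (y.norm_coe_le_norm t).trans (le_max_right _ _)) (fun t => ?_) t
    rw [← dist_eq_norm]
    exact BoundedContinuousFunction.dist_coe_le_dist t
  let x := ContractingWith.fixedPoint F hF
  have hx : F x = x := hF.fixedPoint_isFixedPt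
  have hx' : ∀ t, x t = T x t := fun t => by
    nth_rewrite 1 [← hx]
    rfl
  refine ⟨x, hx', fun t => ?_⟩
  have h0 : 0 ≤ c := (norm_nonneg _).trans (hT0 0)
  have h1 : ‖x‖ ≤ L * ‖x‖ + c := by
    rw [BoundedContinuousFunction.norm_le (by positivity)]
    intro t
    rw [hx']
    exact hb x ‖x‖ (fun t => x.norm_coe_le_norm t) t
  refine (x.norm_coe_le_norm t).trans ?_
  rw [le_div_iff₀ (by linarith)]
  linarith

theorem stmt_13 {n : ℕ}
    (A X Xinv : ℤ → (Fin n → ℝ) →L[ℝ] (Fin n → ℝ)) (t₀ : ℤ)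
    (hAbdd : BddAbove (Set.range fun t : ℤ => ‖A t‖))
    (g : ℤ → ℤ) (hg0 : ∀ t : ℤ, 0 ≤ g t)
    (Q : ℤ → (Fin n → ℝ) → Fin n → ℝ)
    (G : ℤ → (Fin n → ℝ) → (Fin n → ℝ) → Fin n → ℝ)
    (E₁ E₂ : ℝ) (hE₁ : 0 < E₁) (hE₁' : E₁ < 1) (hE₂ : 0 < E₂)
    -- (A1)
    (hA_aa : DiscreteAlmostAutomorphic A)
    (hg_aa : DiscreteAlmostAutomorphic g)
    (hQ_aa : ∀ u : Fin n → ℝ, DiscreteAlmostAutomorphic fun t => Q t u)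
    (hG_aa : ∀ u v : Fin n → ℝ, DiscreteAlmostAutomorphic fun t => G t u v)
    -- (A2)
    (hQ_lip : ∀ (t : ℤ) (u v : Fin n → ℝ), ‖Q t u - Q t v‖ ≤ E₁ * ‖u - v‖)
    -- (A3)
    (hG_lip : ∀ (t : ℤ) (u v w z : Fin n → ℝ),
      ‖G t u w - G t v z‖ ≤ E₂ * (‖u - v‖ + ‖w - z‖))
    -- (A4): exponential dichotomy
    (hX : ∀ t : ℤ, X (t + 1) = A t * X t) (hX0 : X t₀ = 1)
    (hXinv : ∀ t : ℤ, X t * Xinv t = 1) (hXinv' : ∀ t : ℤ, Xinv t * X t = 1)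
    (P : (Fin n → ℝ) →L[ℝ] (Fin n → ℝ)) (hP : P * P = P)
    (α₁ α₂ β₁ β₂ : ℝ) (hα₁ : 0 < α₁) (hα₂ : 0 < α₂) (hβ₁ : 0 < β₁) (hβ₂ : 0 < β₂)
    (hd₁ : ∀ s t : ℤ, s ≤ t → ‖X t * P * Xinv s‖ ≤ β₁ * (1 + α₁) ^ (s - t))
    (hd₂ : ∀ s t : ℤ, t ≤ s → ‖X t * (1 - P) * Xinv s‖ ≤ β₂ * (1 + α₂) ^ (t - s))
    (M₀ : ℝ) (hM₀ : 0 < M₀)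
    (hineq : E₁ * M₀ + (⨆ t : ℤ, ‖Q t 0‖)
      + (((⨆ t : ℤ, ‖A t‖) + 1) * (E₁ * M₀ + (⨆ t : ℤ, ‖Q t 0‖))
          + 2 * E₂ * M₀ + (⨆ t : ℤ, ‖G t 0 0‖))
        * (β₁ * (1 + α₁) / α₁ + β₂ / α₂) ≤ M₀) :
    ∃ x : ℤ → Fin n → ℝ, DiscreteAlmostAutomorphic x ∧ (∀ t : ℤ, ‖x t‖ ≤ M₀) ∧
      ∀ t : ℤ, x t = Q t (x (t - g t))
        + (∑' m : ℕ, (X t * P * Xinv (t - (m : ℤ))) (Lam A g Q G x (t - 1 - (m : ℤ))))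
        - ∑' m : ℕ, (X t * (1 - P) * Xinv (t + (m : ℤ) + 1)) (Lam A g Q G x (t + (m : ℤ))) := by
  have D : Dich_s13 A X Xinv P α₁ α₂ β₁ β₂ :=
    ⟨hX, hXinv, hXinv', hα₁, hα₂, hβ₁, hβ₂, hd₁, hd₂⟩
  set b : ℝ := ⨆ t : ℤ, ‖Q t 0‖ with hb_def
  set a : ℝ := ⨆ t : ℤ, ‖G t 0 0‖ with ha_def
  set N : ℝ := ⨆ t : ℤ, ‖A t‖ with hN_def
  set K : ℝ := β₁ * (1 + α₁) / α₁ + β₂ / α₂ with hK_def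
  have hb : ∀ t, ‖Q t 0‖ ≤ b := fun t => le_ciSup (aa_bdd (hQ_aa 0)) t
  have ha : ∀ t, ‖G t 0 0‖ ≤ a := fun t => le_ciSup (aa_bdd (hG_aa 0 0)) t
  have hN : ∀ t, ‖A t‖ ≤ N := fun t => le_ciSup hAbdd t
  have hb0 : 0 ≤ b := (norm_nonneg _).trans (hb 0)
  have ha0 : 0 ≤ a := (norm_nonneg _).trans (ha 0)
  have hN0 : 0 ≤ N := (norm_nonneg _).trans (hN 0)
  have hK0 : 0 < K := by positivity
  have hA1 : ∀ t (v : Fin n → ℝ), ‖(A t - 1) v‖ ≤ (N + 1) * ‖v‖ := by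
    intro t v
    have h1 : (A t - 1) v = A t v - v := rfl
    have h2 := norm_sub_le (A t v) v
    have h3 := (A t).le_of_opNorm_le (hN t) v
    rw [h1]
    linarith
  set L : ℝ := E₁ + ((N + 1) * E₁ + 2 * E₂) * K with hL_def
  set c : ℝ := b + ((N + 1) * b + a) * K with hc_def
  have hLc : L * M₀ + c ≤ M₀ := by
    rw [hL_def, hc_def]
    linarith
  have hL0 : 0 ≤ L := by positivity
  by_cases hL : L < 1
  swap
  · -- degenerate case: the zero function is a solution
    push Not at hL
    have hc : c ≤ 0 := by nlinarith
    have hNb : 0 ≤ (N + 1) * b := by positivity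
    have haK : 0 ≤ ((N + 1) * b + a) * K := by positivity
    have hbz : b = 0 := by linarith
    have haz : a = 0 := by
      rw [hbz] at hc_def
      have : a * K ≤ 0 := by linarith
      nlinarith
    have hQ0 : ∀ t, Q t 0 = 0 := fun t => norm_le_zero_iff.1 ((hb t).trans hbz.le)
    have hG0 : ∀ t, G t 0 0 = 0 := fun t => norm_le_zero_iff.1 ((ha t).trans haz.le)
    refine ⟨fun _ => 0, fun k' => ⟨id, fun _ => 0, strictMono_id, ?_, ?_⟩, ?_, ?_⟩
    · exact fun _ => tendsto_const_nhds
    · exact fun _ => tendsto_const_nhds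
    · intro t; simpa using hM₀.le
    · intro t; simp [Lam, hQ0, hG0]
  have hQb : ∀ t u B, ‖u‖ ≤ B → ‖Q t u‖ ≤ E₁ * B + b := by
    intro t u B hu
    have h1 := hQ_lip t u 0
    rw [sub_zero] at h1
    have h2 := norm_le_norm_sub_add (Q t u) (Q t 0)
    have := hb t
    nlinarith
  have hGb : ∀ t u v B, ‖u‖ ≤ B → ‖v‖ ≤ B → ‖G t u v‖ ≤ 2 * E₂ * B + a := by
    intro t u v B hu hv
    have h1 := hG_lip t u 0 v 0
    rw [sub_zero, sub_zero] at h1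
    have h2 := norm_le_norm_sub_add (G t u v) (G t 0 0)
    have := ha t
    nlinarith
  have hLb : ∀ (x : ℤ → Fin n → ℝ) B, (∀ t, ‖x t‖ ≤ B) →
      ∀ t, ‖Lam A g Q G x t‖ ≤ (N + 1) * (E₁ * B + b) + (2 * E₂ * B + a) := by
    intro x B hB t
    refine (norm_add_le _ _).trans (add_le_add ((hA1 t _).trans ?_) (hGb _ _ _ _ (hB _) (hB _)))
    exact mul_le_mul_of_nonneg_left (hQb _ _ _ (hB _)) (by positivity)
  have hLd : ∀ (x y : ℤ → Fin n → ℝ) C, (∀ t, ‖x t - y t‖ ≤ C) →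
      ∀ t, ‖Lam A g Q G x t - Lam A g Q G y t‖ ≤ ((N + 1) * E₁ + 2 * E₂) * C := by
    intro x y C hC t
    have e : Lam A g Q G x t - Lam A g Q G y t
        = (A t - 1) (Q t (x (t - g t)) - Q t (y (t - g t)))
          + (G t (x t) (x (t - g t)) - G t (y t) (y (t - g t))) := by
      simp only [Lam, map_sub]
      abel
    rw [e]
    have h1 := hA1 t (Q t (x (t - g t)) - Q t (y (t - g t)))
    have h2 := hQ_lip t (x (t - g t)) (y (t - g t))
    have h3 := hG_lip t (x t) (y t) (x (t - g t)) (y (t - g t))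
    have h4 := hC t
    have h5 := hC (t - g t)
    have h6 : E₁ * ‖x (t - g t) - y (t - g t)‖ ≤ E₁ * C := mul_le_mul_of_nonneg_left h5 hE₁.le
    have h7 : (N + 1) * ‖Q t (x (t - g t)) - Q t (y (t - g t))‖ ≤ (N + 1) * (E₁ * C) :=
      mul_le_mul_of_nonneg_left (h2.trans h6) (by positivity)
    have h8 : E₂ * (‖x t - y t‖ + ‖x (t - g t) - y (t - g t)‖) ≤ E₂ * (C + C) :=
      mul_le_mul_of_nonneg_left (add_le_add h4 h5) hE₂.le
    refine (norm_add_le _ _).trans ?_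
    linarith
  let T : (ℤ → Fin n → ℝ) → ℤ → Fin n → ℝ := fun x t =>
    Q t (x (t - g t)) + green X Xinv P (Lam A g Q G x) t
  have hT : ∀ (x y : ℤ → Fin n → ℝ) (C B : ℝ), (∀ t, ‖x t‖ ≤ B) → (∀ t, ‖y t‖ ≤ B) →
      (∀ t, ‖x t - y t‖ ≤ C) → ∀ t, ‖T x t - T y t‖ ≤ L * C := by
    intro x y C B hx hy hC t
    have e : T x t - T y t = (Q t (x (t - g t)) - Q t (y (t - g t)))
        + green X Xinv P (fun t => Lam A g Q G x t - Lam A g Q G y t) t := by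
      rw [← D.green_sub (hLb x B hx) (hLb y B hy)]
      simp only [T]
      abel
    rw [e]
    have h1 := D.green_le (hLd x y C hC) t
    have h2 := hQ_lip t (x (t - g t)) (y (t - g t))
    have h6 : E₁ * ‖x (t - g t) - y (t - g t)‖ ≤ E₁ * C :=
      mul_le_mul_of_nonneg_left (hC _) hE₁.le
    refine (norm_add_le _ _).trans ?_
    rw [hL_def]
    linarith
  have hT0 : ∀ t, ‖T 0 t‖ ≤ c := by
    intro t
    have h1 := D.green_le (hLb 0 0 (fun t => by simp)) t
    have h2 := hQb t 0 0 (by simp)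
    refine (norm_add_le _ _).trans ?_
    rw [hc_def]
    have e : (0 : ℤ → Fin n → ℝ) (t - g t) = 0 := rfl
    rw [e]
    linarith
  obtain ⟨x, hx, hxb⟩ := contr_exists T hL0 hL hT hT0
  have hxM : ∀ t, ‖x t‖ ≤ M₀ := by
    intro t
    refine (hxb t).trans ?_
    rw [div_le_iff₀ (by linarith)]
    linarith
  refine ⟨x, ?_, hxM, fun t => ?_⟩
  swap
  · refine (hx t).trans ?_
    simp only [T, green]
    abel
  let d : ℕ → Fin n → ℝ := TopologicalSpace.denseSeq (Fin n → ℝ)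
  have hd : DenseRange d := TopologicalSpace.denseRange_denseSeq _
  have hS : Sys d E₁ E₂ A g (fun t i => Q t (d i)) (fun t i j => G t (d i) (d j)) x
      (fun t => Q t (x (t - g t))) (fun t => G t (x t) (x (t - g t))) := by
    refine ⟨fun t => ?_, fun t i => hQ_lip _ _ _, fun t i j => hG_lip _ _ _ _ _⟩
    have h1 : x (t + 1) = Q (t + 1) (x (t + 1 - g (t + 1)))
      + green X Xinv P (Lam A g Q G x) (t + 1) := hx (t + 1)
    have h2 : x t = Q t (x (t - g t)) + green X Xinv P (Lam A g Q G x) t := hx t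
    have h3 : green X Xinv P (Lam A g Q G x) t = x t - Q t (x (t - g t)) :=
      eq_sub_of_add_eq' h2.symm
    rw [D.green_step (hLb x M₀ hxM), h3] at h1
    rw [h1]
    simp only [Lam, map_sub, ContinuousLinearMap.sub_apply, ContinuousLinearMap.one_apply]
    abel
  refine aa_of_unique hS hA_aa hg_aa (fun i => hQ_aa (d i)) (fun i j => hG_aa (d i) (d j))
    (max M₀ (max (E₁ * M₀ + b) (2 * E₂ * M₀ + a))) (fun t => (hxM t).trans (le_max_left _ _))
    (fun t => (hQb _ _ _ (hxM _)).trans ((le_max_left _ _).trans (le_max_right _ _)))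
    (fun t => (hGb _ _ _ _ (hxM _) (hxM _)).trans ((le_max_right _ _).trans (le_max_right _ _)))
    ?_
  generalize max M₀ (max (E₁ * M₀ + b) (2 * E₂ * M₀ + a)) = B
  intro w q p hw hwB
  have hq : ∀ t, q t = Q t (w (t - g t)) := fun t =>
    eq_of_dense hd (fun u v => hQ_lip t u v) hE₁ (fun i => hw.hq t i)
  have hp : ∀ t, p t = G t (w t) (w (t - g t)) := by
    intro t
    have hcont : Continuous fun uv : (Fin n → ℝ) × (Fin n → ℝ) =>
        E₂ * (‖w t - uv.1‖ + ‖w (t - g t) - uv.2‖) - ‖p t - G t uv.1 uv.2‖ := by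
      have hGc : Continuous fun uv : (Fin n → ℝ) × (Fin n → ℝ) => G t uv.1 uv.2 := by
        refine (LipschitzWith.of_dist_le_mul (K := ⟨2 * E₂, by positivity⟩)
          fun u v => ?_).continuous
        rw [dist_eq_norm, dist_eq_norm]
        refine (hG_lip t u.1 v.1 u.2 v.2).trans ?_
        have h2 := norm_fst_le (u - v)
        have h3 := norm_snd_le (u - v)
        simp only [Prod.fst_sub, Prod.snd_sub] at h2 h3
        have : E₂ * (‖u.1 - v.1‖ + ‖u.2 - v.2‖) ≤ E₂ * (‖u - v‖ + ‖u - v‖) :=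
          mul_le_mul_of_nonneg_left (add_le_add h2 h3) hE₂.le
        refine this.trans (le_of_eq ?_)
        change _ = (2 * E₂) * _
        ring
      fun_prop
    have hall : ∀ uv : (Fin n → ℝ) × (Fin n → ℝ),
        0 ≤ E₂ * (‖w t - uv.1‖ + ‖w (t - g t) - uv.2‖) - ‖p t - G t uv.1 uv.2‖ := by
      intro uv
      refine (hd.prodMap hd).induction_on (p := fun uv : (Fin n → ℝ) × (Fin n → ℝ) =>
        0 ≤ E₂ * (‖w t - uv.1‖ + ‖w (t - g t) - uv.2‖) - ‖p t - G t uv.1 uv.2‖) uv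
        (isClosed_le continuous_const hcont) ?_
      rintro ⟨i, j⟩
      exact sub_nonneg.2 (hw.hp t i j)
    have := hall (w t, w (t - g t))
    simp only [sub_self, norm_zero, add_zero, mul_zero] at this
    exact sub_eq_zero.1 (norm_le_zero_iff.1 (by linarith))
  refine contr_unique T hL0 hL (C₀ := B + M₀)
    (fun t => (norm_sub_le _ _).trans (add_le_add (hwB t) (hxM t)))
    (fun C hC => hT w x C (max B M₀) (fun t => (hwB t).trans (le_max_left _ _))
      (fun t => (hxM t).trans (le_max_right _ _)) hC) (fun t => ?_) hx
  have hgr := D.green_unique (hLb w B hwB) (z := fun t => w t - Q t (w (t - g t)))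
    (C' := B + (E₁ * B + b))
    (fun t => (norm_sub_le _ _).trans (add_le_add (hwB t) (hQb _ _ _ (hwB _)))) (fun t => ?_) t
  · simp only [T, ← hgr]
    abel
  · have h1 := hw.eq t
    rw [hq, hq, hp] at h1
    rw [h1]
    simp only [Lam, map_sub, ContinuousLinearMap.sub_apply, ContinuousLinearMap.one_apply]
    abel
end

section
/- Assume (A1′) and (A2)–(A4), with Lipschitz constant E₁ ∈ (0,1), and set a = sup_{t∈ℤ}‖G(t,0,0)‖ and b = sup_{t∈ℤ}‖Q(t,0)‖. Suppose M₀ > 0 satisfies E₁M₀ + b + [(‖A‖+1)(E₁M₀ + b) + 2E₂M₀ + a]·[β₁(1+α₁)/α₁ + β₂/α₂] ≤ M₀, where ‖A‖ = sup_{t∈ℤ}|A(t)|. Then there exists a discrete almost periodic function x : ℤ → ℝⁿ with sup_{t∈ℤ}‖x(t)‖ ≤ M₀ satisfying, for every t ∈ ℤ, x(t) = Q(t, x(t−g(t))) + ∑_{j=-∞}^{t−1} X(t)P X(j+1)⁻¹ Λ(j,x) − ∑_{j=t}^{∞} X(t)(I−P) X(j+1)⁻¹ Λ(j,x), where Λ(j,x)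 = (A(j)−I)Q(j, x(j−g(j))) + G(j, x(j), x(j−g(j))); i.e., the neutral system x(t+1) = A(t)x(t) + ΔQ(t, x(t−g(t))) + G(t, x(t), x(t−g(t))) has an almost periodic solution with sup norm at most M₀. -/
/-- A function `f : ℤ → 𝕏` is discrete almost periodic if for every `ε > 0` the set of
`ε`-translation numbers `{τ : ‖f(t+τ) − f(t)‖ < ε for all t}` is relatively dense in `ℤ`:
there is a positive integer `l` such that every interval of `l` consecutive integers
contains such a `τ`. -/
def DiscreteAlmostPeriodic {𝕏 : Type*} [SeminormedAddGroup 𝕏] (f : ℤ → 𝕏) : Prop :=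
  ∀ ε : ℝ, 0 < ε → ∃ l : ℕ, 0 < l ∧ ∀ a : ℤ, ∃ τ : ℤ, a ≤ τ ∧ τ < a + l ∧
    ∀ t : ℤ, ‖f (t + τ) - f t‖ < ε

/-! ### Common almost periods -/

/-- A family of subsets of the integers behaving like the sets of almost periods. -/
def GoodPer (S : ℝ → ℤ → Prop) : Prop :=
  (∀ ε : ℝ, 0 < ε → ∃ l : ℕ, 0 < l ∧ ∀ a : ℤ, ∃ τ : ℤ, a ≤ τ ∧ τ < a + l ∧ S ε τ) ∧
  (∀ ε τ σ, S (ε / 2) τ → S (ε / 2) σ → S ε (τ - σ))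

lemma DiscreteAlmostPeriodic.good {𝕏 : Type*} [SeminormedAddCommGroup 𝕏] {f : ℤ → 𝕏}
    (hf : DiscreteAlmostPeriodic f) :
    GoodPer (fun ε τ => ∀ t, ‖f (t + τ) - f t‖ < ε) := by
  refine ⟨hf, ?_⟩
  intro ε τ σ h1 h2 t
  have a1 := h1 (t - σ)
  have a2 := h2 (t - σ)
  have e1 : t - σ + τ = t + (τ - σ) := by ring
  have e2 : t - σ + σ = t := by ring
  rw [e1] at a1
  rw [e2, norm_sub_rev] at a2
  have := norm_add_le (f (t + (τ - σ)) - f (t - σ)) (f (t - σ) - f t)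
  rw [sub_add_sub_cancel] at this
  linarith

lemma GoodPer.and {S T : ℝ → ℤ → Prop} (hS : GoodPer S) (hT : GoodPer T) :
    GoodPer (fun ε τ => S ε τ ∧ T ε τ) := by
  refine ⟨?_, fun ε τ σ h1 h2 => ⟨hS.2 ε τ σ h1.1 h2.1, hT.2 ε τ σ h1.2 h2.2⟩⟩
  intro ε hε
  obtain ⟨l₁, -, H1⟩ := hS.1 (ε / 2) (by positivity)
  obtain ⟨l₂, -, H2⟩ := hT.1 (ε / 2) (by positivity)
  choose p hp1 hp2 hp using H1
  choose q hq1 hq2 hq using H2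
  -- differences take finitely many values
  have hfin : (Set.range fun a => p a - q a).Finite := by
    apply (Set.finite_Icc (-(l₂ : ℤ)) l₁).subset
    rintro _ ⟨a, rfl⟩
    have := hp1 a; have := hp2 a; have := hq1 a; have := hq2 a
    simp only [Set.mem_Icc]
    constructor <;> omega
  have hrep : ∀ d : ℤ, ∃ r : ℤ, d ∈ (Set.range fun a => p a - q a) → p r - q r = d := by
    intro d
    by_cases h : d ∈ (Set.range fun a => p a - q a)
    · obtain ⟨r, hr⟩ := h
      exact ⟨r, fun _ => hr⟩
    · exact ⟨0, fun h' => absurd h' h⟩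
  choose r hr using hrep
  obtain ⟨N, hN⟩ : ∃ N : ℕ, ∀ d ∈ (Set.range fun a => p a - q a), |p (r d)| ≤ N := by
    obtain ⟨M, hM⟩ := (hfin.image fun d => |p (r d)|).bddAbove
    refine ⟨M.toNat, fun d hd => ?_⟩
    have := hM (Set.mem_image_of_mem _ hd)
    omega
  refine ⟨2 * N + l₁ + 1, by omega, fun a => ?_⟩
  have hmem : p (a + N) - q (a + N) ∈ (Set.range fun a => p a - q a) := ⟨_, rfl⟩
  have h3 := hr _ hmem
  have h4 := hN _ hmem
  set s := r (p (a + N) - q (a + N)) with hs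
  rw [abs_le] at h4
  refine ⟨p (a + N) - p s, ?_, ?_, ?_, ?_⟩
  · have := hp1 (a + N); omega
  · have := hp2 (a + N); push_cast; omega
  · exact hS.2 _ _ _ (hp _) (hp _)
  · have e : p (a + N) - p s = q (a + N) - q s := by omega
    rw [e]
    exact hT.2 _ _ _ (hq _) (hq _)

lemma GoodPer.finset {ι : Type*} (s : Finset ι) {S : ι → ℝ → ℤ → Prop}
    (hS : ∀ i, GoodPer (S i)) :
    GoodPer (fun ε τ => ∀ i ∈ s, S i ε τ) := by
  classical
  induction s using Finset.induction_on with
  | empty =>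
    refine ⟨fun ε _ => ⟨1, one_pos, fun a => ⟨a, le_rfl, by simp, by simp⟩⟩, by simp⟩
  | insert i s hi ih =>
    simpa [Finset.forall_mem_insert] using (hS i).and ih

lemma DiscreteAlmostPeriodic.bdd {𝕏 : Type*} [SeminormedAddCommGroup 𝕏] {f : ℤ → 𝕏}
    (hf : DiscreteAlmostPeriodic f) : BddAbove (Set.range fun t => ‖f t‖) := by
  obtain ⟨l, -, H⟩ := hf 1 one_pos
  obtain ⟨M, hM⟩ := ((Set.finite_Icc (0 : ℤ) l).image fun t => ‖f t‖).bddAbove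
  refine ⟨M + 1, ?_⟩
  rintro _ ⟨t, rfl⟩
  obtain ⟨τ, h1, h2, h3⟩ := H (-t)
  have a1 := hM (Set.mem_image_of_mem (fun t => ‖f t‖)
    (show t + τ ∈ Set.Icc (0 : ℤ) l from ⟨by omega, by omega⟩))
  have a2 := h3 t
  have a3 := norm_sub_norm_le (f t) (f (t + τ))
  rw [norm_sub_rev] at a3
  simp only at a1 ⊢
  linarith

/-! ### The Green operator of a dichotomy -/

/-- Abstract dichotomy data. -/
structure Dich_s14 {E : Type*} [NormedAddCommGroup E] [NormedSpace ℝ E]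
    (A : ℤ → E →L[ℝ] E) (U V : ℤ → ℤ → E →L[ℝ] E) (α₁ α₂ β₁ β₂ : ℝ) : Prop where
  a1 : 0 < α₁
  a2 : 0 < α₂
  b1 : 0 < β₁
  b2 : 0 < β₂
  one : ∀ t, U t t + V t t = 1
  Ul : ∀ t s, U (t + 1) s = A t * U t s
  Vl : ∀ t s, V (t + 1) s = A t * V t s
  Ur : ∀ t s, U t (s + 1) * A s = U t s
  Vr : ∀ t s, V t (s + 1) * A s = V t s
  Ub : ∀ s t, s ≤ t → ‖U t s‖ ≤ β₁ * (1 + α₁) ^ (s - t)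
  Vb : ∀ s t, t ≤ s → ‖V t s‖ ≤ β₂ * (1 + α₂) ^ (t - s)

section Green

set_option linter.unusedSectionVars false

variable {E : Type*} [NormedAddCommGroup E] [NormedSpace ℝ E] [CompleteSpace E]
  {A : ℤ → E →L[ℝ] E} {U V : ℤ → ℤ → E →L[ℝ] E} {α₁ α₂ β₁ β₂ : ℝ}

/-- The Green operator. -/
noncomputable def Grn (U V : ℤ → ℤ → E →L[ℝ] E) (h : ℤ → E) (t : ℤ) : E :=
  (∑' m : ℕ, U t (t - (m : ℤ)) (h (t - 1 - (m : ℤ))))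
    - ∑' m : ℕ, V t (t + (m : ℤ) + 1) (h (t + (m : ℤ)))

lemma hasSum_geo1 {α β : ℝ} (ha : 0 < α) :
    HasSum (fun m : ℕ => β * ((1 + α)⁻¹) ^ m) (β * (1 + α) / α) := by
  have h1 : (1 + α)⁻¹ < 1 := inv_lt_one_of_one_lt₀ (by linarith)
  have := (hasSum_geometric_of_lt_one (by positivity) h1).mul_left β
  have h2 : (1 : ℝ) + α ≠ 0 := by positivity
  have e : 1 - (1 + α)⁻¹ = α / (1 + α) := by field_simp; ring
  rw [e, inv_div, ← mul_div_assoc] at this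
  exact this

lemma hasSum_geo2 {α β : ℝ} (ha : 0 < α) :
    HasSum (fun m : ℕ => β * ((1 + α)⁻¹) ^ (m + 1)) (β / α) := by
  have := (hasSum_geo1 (β := β) ha).mul_right ((1 + α)⁻¹)
  have h2 : (1 : ℝ) + α ≠ 0 := by positivity
  have e : β * (1 + α) / α * (1 + α)⁻¹ = β / α := by field_simp
  rw [e] at this
  simpa only [pow_succ, mul_assoc] using this

lemma Dich_s14.Ubm (D : Dich_s14 A U V α₁ α₂ β₁ β₂) (t : ℤ) (m : ℕ) :
    ‖U t (t - (m : ℤ))‖ ≤ β₁ * ((1 + α₁)⁻¹) ^ m := by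
  have := D.Ub (t - m) t (by omega)
  rwa [show t - (m : ℤ) - t = -(m : ℤ) by ring, zpow_neg, zpow_natCast, ← inv_pow] at this

lemma Dich_s14.Vbm (D : Dich_s14 A U V α₁ α₂ β₁ β₂) (t : ℤ) (m : ℕ) :
    ‖V t (t + (m : ℤ))‖ ≤ β₂ * ((1 + α₂)⁻¹) ^ m := by
  have := D.Vb (t + m) t (by omega)
  rwa [show t - (t + (m : ℤ)) = -(m : ℤ) by ring, zpow_neg, zpow_natCast, ← inv_pow] at this

lemma Dich_s14.Ut (D : Dich_s14 A U V α₁ α₂ β₁ β₂) {h : ℤ → E} {H : ℝ} (hH : ∀ t, ‖h t‖ ≤ H)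
    (t : ℤ) (m : ℕ) :
    ‖U t (t - (m : ℤ)) (h (t - 1 - (m : ℤ)))‖ ≤ (H * β₁) * ((1 + α₁)⁻¹) ^ m := by
  have h0 : 0 ≤ H := (norm_nonneg _).trans (hH 0)
  have := D.a1
  have := D.b1
  calc _ ≤ ‖U t (t - (m : ℤ))‖ * ‖h (t - 1 - (m : ℤ))‖ := (U t _).le_opNorm _
    _ ≤ (β₁ * ((1 + α₁)⁻¹) ^ m) * H := by
      gcongr
      · exact D.Ubm t m
      · exact hH _
    _ = _ := by ring

lemma Dich_s14.Vt (D : Dich_s14 A U V α₁ α₂ β₁ β₂) {h : ℤ → E} {H : ℝ} (hH : ∀ t, ‖h t‖ ≤ H)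
    (t : ℤ) (m : ℕ) :
    ‖V t (t + (m : ℤ) + 1) (h (t + (m : ℤ)))‖ ≤ (H * β₂) * ((1 + α₂)⁻¹) ^ (m + 1) := by
  have h0 : 0 ≤ H := (norm_nonneg _).trans (hH 0)
  have := D.a2
  have := D.b2
  calc _ ≤ ‖V t (t + (m : ℤ) + 1)‖ * ‖h (t + (m : ℤ))‖ := (V t _).le_opNorm _
    _ ≤ (β₂ * ((1 + α₂)⁻¹) ^ (m + 1)) * H := by
      gcongr
      · have := D.Vbm t (m + 1)
        push_cast at this
        rwa [← add_assoc] at this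
      · exact hH _
    _ = _ := by ring

lemma Dich_s14.sumU (D : Dich_s14 A U V α₁ α₂ β₁ β₂) {h : ℤ → E} {H : ℝ} (hH : ∀ t, ‖h t‖ ≤ H)
    (t : ℤ) : Summable (fun m : ℕ => U t (t - (m : ℤ)) (h (t - 1 - (m : ℤ)))) :=
  Summable.of_norm_bounded (hasSum_geo1 D.a1).summable (D.Ut hH t)

lemma Dich_s14.sumV (D : Dich_s14 A U V α₁ α₂ β₁ β₂) {h : ℤ → E} {H : ℝ} (hH : ∀ t, ‖h t‖ ≤ H)
    (t : ℤ) : Summable (fun m : ℕ => V t (t + (m : ℤ) + 1) (h (t + (m : ℤ)))) :=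
  Summable.of_norm_bounded (hasSum_geo2 D.a2).summable (D.Vt hH t)

lemma Dich_s14.bound (D : Dich_s14 A U V α₁ α₂ β₁ β₂) {h : ℤ → E} {H : ℝ} (hH : ∀ t, ‖h t‖ ≤ H)
    (t : ℤ) : ‖Grn U V h t‖ ≤ (β₁ * (1 + α₁) / α₁ + β₂ / α₂) * H := by
  have h1 := tsum_of_norm_bounded (hasSum_geo1 D.a1) (D.Ut hH t)
  have h2 := tsum_of_norm_bounded (hasSum_geo2 D.a2) (D.Vt hH t)
  calc _ ≤ _ := norm_sub_le _ _
    _ ≤ _ := add_le_add h1 h2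
    _ = _ := by ring

lemma Dich_s14.sub (D : Dich_s14 A U V α₁ α₂ β₁ β₂) {h k : ℤ → E} {H K : ℝ} (hH : ∀ t, ‖h t‖ ≤ H)
    (hK : ∀ t, ‖k t‖ ≤ K) (t : ℤ) :
    Grn U V h t - Grn U V k t = Grn U V (fun j => h j - k j) t := by
  simp only [Grn, map_sub]
  rw [(D.sumU hH t).tsum_sub (D.sumU hK t), (D.sumV hH t).tsum_sub (D.sumV hK t)]
  abel

lemma Dich_s14.recur (D : Dich_s14 A U V α₁ α₂ β₁ β₂) {h : ℤ → E} {H : ℝ} (hH : ∀ t, ‖h t‖ ≤ H)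
    (t : ℤ) : Grn U V h (t + 1) = A t (Grn U V h t) + h t := by
  have e1 : (∑' m : ℕ, U (t + 1) (t + 1 - (m : ℤ)) (h (t + 1 - 1 - (m : ℤ))))
      = U (t + 1) (t + 1) (h t) + A t (∑' m : ℕ, U t (t - (m : ℤ)) (h (t - 1 - (m : ℤ)))) := by
    rw [(D.sumU hH (t + 1)).tsum_eq_zero_add, (A t).map_tsum (D.sumU hH t)]
    congr 1
    · simp
    · congr 1
      ext1 m
      rw [D.Ul]
      simp only [mul_apply_eq_comp]
      push_cast
      rw [show t + 1 - ((m : ℤ) + 1) = t - m by ring,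
        show t + 1 - 1 - ((m : ℤ) + 1) = t - 1 - m by ring]
  have e2 : A t (∑' m : ℕ, V t (t + (m : ℤ) + 1) (h (t + (m : ℤ)))) = V (t + 1) (t + 1) (h t) +
      ∑' m : ℕ, V (t + 1) (t + 1 + (m : ℤ) + 1) (h (t + 1 + (m : ℤ))) := by
    rw [(D.sumV hH t).tsum_eq_zero_add, map_add, (A t).map_tsum
      ((summable_nat_add_iff 1).2 (D.sumV hH t))]
    congr 1
    · simp [D.Vl]
    · congr 1
      ext1 m
      rw [D.Vl]
      simp only [mul_apply_eq_comp]
      push_cast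
      rw [show t + ((m : ℤ) + 1) = t + 1 + m by ring]
  have e3 : U (t + 1) (t + 1) (h t) + V (t + 1) (t + 1) (h t) = h t := by
    rw [← add_apply, D.one]; rfl
  rw [Grn, e1, Grn, map_sub, e2]
  nth_rewrite 3 [← e3]
  abel

lemma Dich_s14.uniq (D : Dich_s14 A U V α₁ α₂ β₁ β₂) {h y : ℤ → E} {H Y : ℝ} (hH : ∀ t, ‖h t‖ ≤ H)
    (hY : ∀ t, ‖y t‖ ≤ Y) (hy : ∀ t, y (t + 1) = A t (y t) + h t) (t : ℤ) :
    y t = Grn U V h t := by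
  have hh : ∀ t, h t = y (t + 1) - A t (y t) := fun t => by rw [hy]; abel
  have Y0 : 0 ≤ Y := (norm_nonneg _).trans (hY 0)
  have geo : ∀ {α : ℝ} (β : ℝ), 0 < α →
      Filter.Tendsto (fun N : ℕ => (β * ((1 + α)⁻¹) ^ N) * Y) Filter.atTop (nhds 0) := by
    intro α β ha
    have := (hasSum_geo1 (β := β) ha).summable.tendsto_atTop_zero.mul_const Y
    simpa using this
  have s1 : ∑' m : ℕ, U t (t - (m : ℤ)) (h (t - 1 - (m : ℤ))) = U t t (y t) := by
    refine HasSum.tsum_eq ((D.sumU hH t).hasSum_iff_tendsto_nat.2 ?_)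
    have e : ∀ N : ℕ, ∑ m ∈ Finset.range N, U t (t - (m : ℤ)) (h (t - 1 - (m : ℤ)))
        = U t t (y t) - U t (t - N) (y (t - N)) := by
      intro N
      induction N with
      | zero => simp
      | succ N ih =>
        rw [Finset.sum_range_succ, ih, hh, map_sub, ← mul_apply_eq_comp]
        have h1 := D.Ur t (t - 1 - N)
        rw [show t - 1 - (N : ℤ) + 1 = t - N by ring] at h1 ⊢
        rw [h1]
        push_cast
        rw [show t - ((N : ℤ) + 1) = t - 1 - N by ring]
        abel
    simp only [e]
    have z : Filter.Tendsto (fun N : ℕ => U t (t - N) (y (t - N))) Filter.atTop (nhds 0) := by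
      refine squeeze_zero_norm (fun N => ?_) (geo β₁ D.a1)
      have := D.a1
      have := D.b1
      refine ((U t _).le_opNorm _).trans ?_
      gcongr
      · exact D.Ubm t N
      · exact hY _
    simpa using z.const_sub (U t t (y t))
  have s2 : ∑' m : ℕ, V t (t + (m : ℤ) + 1) (h (t + (m : ℤ))) = - V t t (y t) := by
    refine HasSum.tsum_eq ((D.sumV hH t).hasSum_iff_tendsto_nat.2 ?_)
    have e : ∀ N : ℕ, ∑ m ∈ Finset.range N, V t (t + (m : ℤ) + 1) (h (t + (m : ℤ)))
        = V t (t + N) (y (t + N)) - V t t (y t) := by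
      intro N
      induction N with
      | zero => simp
      | succ N ih =>
        rw [Finset.sum_range_succ, ih, hh, map_sub, ← mul_apply_eq_comp,
          D.Vr]
        push_cast
        rw [← add_assoc]
        abel
    simp only [e]
    have z : Filter.Tendsto (fun N : ℕ => V t (t + N) (y (t + N))) Filter.atTop (nhds 0) := by
      refine squeeze_zero_norm (fun N => ?_) (geo β₂ D.a2)
      have := D.a2
      have := D.b2
      refine ((V t _).le_opNorm _).trans ?_
      gcongr
      · exact D.Vbm t N
      · exact hY _
    simpa using z.sub_const (V t t (y t))
  rw [Grn, s1, s2, sub_neg_eq_add, ← add_apply, D.one]; rfl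

end Green

/-- Under (A1′) and (A2)–(A4) with `E₁ ∈ (0,1)`, setting
`a = sup_t ‖G(t,0,0)‖`, `b = sup_t ‖Q(t,0)‖` and `‖A‖ = sup_t ‖A(t)‖`, if `M₀ > 0`
satisfies `E₁M₀ + b + [(‖A‖+1)(E₁M₀+b) + 2E₂M₀ + a]·[β₁(1+α₁)/α₁ + β₂/α₂] ≤ M₀`, then
the neutral system has a discrete almost periodic solution `x` with `sup_t ‖x(t)‖ ≤ M₀`
satisfying the fixed point equation
`x(t) = Q(t, x(t−g(t))) + ∑_{j=-∞}^{t−1} X(t)P X(j+1)⁻¹ Λ(j,x)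
  − ∑_{j=t}^{∞} X(t)(I−P) X(j+1)⁻¹ Λ(j,x)`
(the sums being reindexed over `ℕ` via `j = t − 1 − m` and `j = t + m`). -/
theorem stmt_14 {n : ℕ}
    (A X Xinv : ℤ → (Fin n → ℝ) →L[ℝ] (Fin n → ℝ)) (t₀ : ℤ)
    (hAbdd : BddAbove (Set.range fun t : ℤ => ‖A t‖))
    (g : ℤ → ℤ) (hg0 : ∀ t : ℤ, 0 ≤ g t)
    (Q : ℤ → (Fin n → ℝ) → Fin n → ℝ)
    (G : ℤ → (Fin n → ℝ) → (Fin n → ℝ) → Fin n → ℝ)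
    (E₁ E₂ : ℝ) (hE₁ : 0 < E₁) (hE₁' : E₁ < 1) (hE₂ : 0 < E₂)
    -- (A1′)
    (hA_ap : DiscreteAlmostPeriodic A)
    (hg_ap : DiscreteAlmostPeriodic g)
    (hQ_ap : ∀ u : Fin n → ℝ, DiscreteAlmostPeriodic fun t => Q t u)
    (hG_ap : ∀ u v : Fin n → ℝ, DiscreteAlmostPeriodic fun t => G t u v)
    -- (A2)
    (hQ_lip : ∀ (t : ℤ) (u v : Fin n → ℝ), ‖Q t u - Q t v‖ ≤ E₁ * ‖u - v‖)
    -- (A3)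
    (hG_lip : ∀ (t : ℤ) (u v w z : Fin n → ℝ),
      ‖G t u w - G t v z‖ ≤ E₂ * (‖u - v‖ + ‖w - z‖))
    -- (A4): exponential dichotomy
    (hX : ∀ t : ℤ, X (t + 1) = A t * X t) (hX0 : X t₀ = 1)
    (hXinv : ∀ t : ℤ, X t * Xinv t = 1) (hXinv' : ∀ t : ℤ, Xinv t * X t = 1)
    (P : (Fin n → ℝ) →L[ℝ] (Fin n → ℝ)) (hP : P * P = P)
    (α₁ α₂ β₁ β₂ : ℝ) (hα₁ : 0 < α₁) (hα₂ : 0 < α₂) (hβ₁ : 0 < β₁) (hβ₂ : 0 < β₂)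
    (hd₁ : ∀ s t : ℤ, s ≤ t → ‖X t * P * Xinv s‖ ≤ β₁ * (1 + α₁) ^ (s - t))
    (hd₂ : ∀ s t : ℤ, t ≤ s → ‖X t * (1 - P) * Xinv s‖ ≤ β₂ * (1 + α₂) ^ (t - s))
    (M₀ : ℝ) (hM₀ : 0 < M₀)
    (hineq : E₁ * M₀ + (⨆ t : ℤ, ‖Q t 0‖)
      + (((⨆ t : ℤ, ‖A t‖) + 1) * (E₁ * M₀ + (⨆ t : ℤ, ‖Q t 0‖))
          + 2 * E₂ * M₀ + (⨆ t : ℤ, ‖G t 0 0‖))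
        * (β₁ * (1 + α₁) / α₁ + β₂ / α₂) ≤ M₀) :
    ∃ x : ℤ → Fin n → ℝ, DiscreteAlmostPeriodic x ∧ (∀ t : ℤ, ‖x t‖ ≤ M₀) ∧
      ∀ t : ℤ, x t = Q t (x (t - g t))
        + (∑' m : ℕ, (X t * P * Xinv (t - (m : ℤ))) (Lam A g Q G x (t - 1 - (m : ℤ))))
        - ∑' m : ℕ, (X t * (1 - P) * Xinv (t + (m : ℤ) + 1)) (Lam A g Q G x (t + (m : ℤ))) := by
  set N := ⨆ t : ℤ, ‖A t‖ with hN
  set b := ⨆ t : ℤ, ‖Q t 0‖ with hb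
  set a := ⨆ t : ℤ, ‖G t 0 0‖ with ha
  have hNA : ∀ t, ‖A t‖ ≤ N := fun t => le_ciSup hAbdd t
  have hbQ : ∀ t, ‖Q t 0‖ ≤ b := fun t => le_ciSup (hQ_ap 0).bdd t
  have haG : ∀ t, ‖G t 0 0‖ ≤ a := fun t => le_ciSup (hG_ap 0 0).bdd t
  have N0 : 0 ≤ N := (norm_nonneg _).trans (hNA 0)
  have b0 : 0 ≤ b := (norm_nonneg _).trans (hbQ 0)
  have a0 : 0 ≤ a := (norm_nonneg _).trans (haG 0)
  have hr : ∀ s, Xinv (s + 1) * A s = Xinv s := by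
    intro s
    calc Xinv (s + 1) * A s = Xinv (s + 1) * A s * (X s * Xinv s) := by rw [hXinv, mul_one]
      _ = Xinv (s + 1) * (A s * X s) * Xinv s := by simp only [mul_assoc]
      _ = Xinv s := by rw [← hX, hXinv', one_mul]
  have D : Dich_s14 A (fun t s => X t * P * Xinv s) (fun t s => X t * (1 - P) * Xinv s)
      α₁ α₂ β₁ β₂ :=
    { a1 := hα₁, a2 := hα₂, b1 := hβ₁, b2 := hβ₂
      one := fun t => by
        rw [← add_mul, ← mul_add, add_sub_cancel, mul_one, hXinv]
      Ul := fun t s => by simp only [hX, mul_assoc]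
      Vl := fun t s => by simp only [hX, mul_assoc]
      Ur := fun t s => by rw [mul_assoc, hr]
      Vr := fun t s => by rw [mul_assoc, hr]
      Ub := hd₁
      Vb := hd₂ }
  set U := (fun t s => X t * P * Xinv s) with hU
  set V := (fun t s => X t * (1 - P) * Xinv s) with hV
  set K := β₁ * (1 + α₁) / α₁ + β₂ / α₂ with hK
  have K0 : 0 < K := by positivity
  suffices hmain : ∃ x : ℤ → Fin n → ℝ, DiscreteAlmostPeriodic x ∧ (∀ t : ℤ, ‖x t‖ ≤ M₀) ∧
      ∀ t : ℤ, x t = Q t (x (t - g t)) + Grn U V (Lam A g Q G x) t by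
    obtain ⟨x, h1, h2, h3⟩ := hmain
    refine ⟨x, h1, h2, fun t => (h3 t).trans ?_⟩
    simp only [Grn, hU, hV]
    abel
  clear hr hX hX0 hXinv hXinv' hd₁ hd₂ hP
  clear_value U V
  set L := E₁ + ((N + 1) * E₁ + 2 * E₂) * K with hL
  have L0 : 0 < L := by positivity
  have hA1 : ∀ t, ‖A t - 1‖ ≤ N + 1 := fun t => by
    refine (norm_sub_le _ _).trans (add_le_add (hNA t) ?_)
    exact ContinuousLinearMap.norm_id_le
  have hQb : ∀ t u M, ‖u‖ ≤ M → ‖Q t u‖ ≤ E₁ * M + b := by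
    intro t u M hu
    have h1 := hQ_lip t u 0
    rw [sub_zero] at h1
    have h2 := norm_sub_norm_le (Q t u) (Q t 0)
    have h3 := hbQ t
    have h4 : E₁ * ‖u‖ ≤ E₁ * M := by gcongr
    linarith
  have hGb : ∀ t u v M, ‖u‖ ≤ M → ‖v‖ ≤ M → ‖G t u v‖ ≤ 2 * E₂ * M + a := by
    intro t u v M hu hv
    have h1 := hG_lip t u 0 v 0
    rw [sub_zero, sub_zero] at h1
    have h2 := norm_sub_norm_le (G t u v) (G t 0 0)
    have h3 := haG t
    have h4 : E₂ * (‖u‖ + ‖v‖) ≤ E₂ * (M + M) := by gcongr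
    linarith
  have hLb : ∀ (x : ℤ → Fin n → ℝ) (M : ℝ), (∀ t, ‖x t‖ ≤ M) →
      ∀ j, ‖Lam A g Q G x j‖ ≤ (N + 1) * (E₁ * M + b) + (2 * E₂ * M + a) := by
    intro x M hx j
    refine (norm_add_le _ _).trans (add_le_add ?_ (hGb _ _ _ _ (hx _) (hx _)))
    refine ((A j - 1).le_opNorm _).trans ?_
    exact mul_le_mul (hA1 j) (hQb _ _ _ (hx _)) (norm_nonneg _) (by positivity)
  have hLd : ∀ (x y : ℤ → Fin n → ℝ) (d : ℝ), (∀ t, ‖x t - y t‖ ≤ d) →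
      ∀ j, ‖Lam A g Q G x j - Lam A g Q G y j‖ ≤ ((N + 1) * E₁ + 2 * E₂) * d := by
    intro x y d hd j
    have e : Lam A g Q G x j - Lam A g Q G y j =
        (A j - 1) (Q j (x (j - g j)) - Q j (y (j - g j))) +
        (G j (x j) (x (j - g j)) - G j (y j) (y (j - g j))) := by
      simp only [Lam, map_sub]; abel
    rw [e]
    have h1 : ‖(A j - 1) (Q j (x (j - g j)) - Q j (y (j - g j)))‖ ≤ (N + 1) * (E₁ * d) := by
      refine ((A j - 1).le_opNorm _).trans ?_
      refine mul_le_mul (hA1 j) ((hQ_lip _ _ _).trans ?_) (norm_nonneg _) (by positivity)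
      gcongr; exact hd _
    have h2 : ‖G j (x j) (x (j - g j)) - G j (y j) (y (j - g j))‖ ≤ E₂ * (d + d) := by
      refine (hG_lip _ _ _ _ _).trans ?_
      gcongr <;> exact hd _
    refine (norm_add_le _ _).trans ((add_le_add h1 h2).trans (le_of_eq ?_))
    ring
  by_cases hL1 : 1 ≤ L
  · -- degenerate case
    have hb0 : b = 0 := by
      have : 0 ≤ ((N + 1) * b + a) * K := by positivity
      have : M₀ * 1 ≤ M₀ * L := by gcongr
      apply le_antisymm _ b0
      nlinarith
    have ha0 : a = 0 := by
      have : M₀ * 1 ≤ M₀ * L := by gcongr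
      have h3 : a * K ≤ 0 := by rw [hb0] at hineq; nlinarith
      apply le_antisymm _ a0
      by_contra hc
      push Not at hc
      have := mul_pos hc K0
      linarith
    have q0 : ∀ t, Q t 0 = 0 := fun t => by
      have := hbQ t; rw [hb0] at this; simpa using this
    have g0 : ∀ t, G t 0 0 = 0 := fun t => by
      have := haG t; rw [ha0] at this; simpa using this
    refine ⟨fun _ => 0, ?_, fun t => by simp [hM₀.le], fun t => ?_⟩
    · intro ε hε
      exact ⟨1, one_pos, fun a => ⟨a, le_rfl, by simp, by simpa using hε⟩⟩
    · simp [Grn, Lam, q0, g0]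
  push Not at hL1
  -- the contraction
  have Tb : ∀ (x : ℤ → Fin n → ℝ) (M : ℝ), (∀ t, ‖x t‖ ≤ M) →
      ∀ t, ‖Q t (x (t - g t)) + Grn U V (Lam A g Q G x) t‖ ≤
        E₁ * M + b + K * ((N + 1) * (E₁ * M + b) + (2 * E₂ * M + a)) := fun x M hx t =>
    (norm_add_le _ _).trans (add_le_add (hQb _ _ _ (hx _)) (D.bound (hLb x M hx) t))
  let T : BoundedContinuousFunction ℤ (Fin n → ℝ) → BoundedContinuousFunction ℤ (Fin n → ℝ) :=
    fun x => BoundedContinuousFunction.ofNormedAddCommGroupDiscrete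
      (fun t => Q t (x (t - g t)) + Grn U V (Lam A g Q G x) t) _
      (Tb x ‖x‖ x.norm_coe_le_norm)
  have hT : ContractingWith ⟨L, L0.le⟩ T := by
    refine ⟨hL1, LipschitzWith.of_dist_le_mul fun x y => ?_⟩
    rw [BoundedContinuousFunction.dist_le (by positivity)]
    intro t
    have hxy : ∀ t, ‖x t - y t‖ ≤ dist x y := fun t => by
      rw [← dist_eq_norm]; exact BoundedContinuousFunction.dist_coe_le_dist t
    change dist (Q t (x (t - g t)) + Grn U V (Lam A g Q G x) t)
      (Q t (y (t - g t)) + Grn U V (Lam A g Q G y) t) ≤ L * dist x y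
    rw [dist_eq_norm, add_sub_add_comm, D.sub (hLb x _ x.norm_coe_le_norm)
      (hLb y _ y.norm_coe_le_norm)]
    have h1 := D.bound (hLd x y _ hxy) t
    have h2 := (hQ_lip t (x (t - g t)) (y (t - g t))).trans
      (mul_le_mul_of_nonneg_left (hxy _) hE₁.le)
    refine (norm_add_le _ _).trans ((add_le_add h2 h1).trans (le_of_eq ?_))
    rw [hL]; ring
  obtain ⟨xf, hxf⟩ : ∃ x, T x = x := ⟨_, hT.fixedPoint_isFixedPt⟩
  have hx : ∀ t, xf t = Q t (xf (t - g t)) + Grn U V (Lam A g Q G xf) t := fun t =>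
    (congrArg (fun f : BoundedContinuousFunction ℤ (Fin n → ℝ) => f t) hxf).symm
  have hxn : ‖xf‖ ≤ M₀ := by
    have h1 : ‖xf‖ ≤ E₁ * ‖xf‖ + b + K * ((N + 1) * (E₁ * ‖xf‖ + b) + (2 * E₂ * ‖xf‖ + a)) := by
      rw [BoundedContinuousFunction.norm_le (by positivity)]
      intro t
      rw [hx t]
      exact Tb xf _ xf.norm_coe_le_norm t
    have h2 : (1 - L) * ‖xf‖ ≤ (1 - L) * M₀ := by rw [hL]; linarith
    exact le_of_mul_le_mul_left h2 (by linarith)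
  have hxM : ∀ t, ‖xf t‖ ≤ M₀ := fun t => (xf.norm_coe_le_norm t).trans hxn
  obtain ⟨x, hxe⟩ : ∃ x : ℤ → Fin n → ℝ, x = xf := ⟨_, rfl⟩
  rw [← hxe] at hx hxM
  refine ⟨x, ?_, hxM, hx⟩
  clear hxn hxf hxe xf hT T
  -- almost periodicity
  intro ε hε
  set W := M₀ + (E₁ * M₀ + b) with hW
  set C := (2 * E₁ + 1) + K * (2 * W + (N + 1) * (2 * E₁ + 1) + (1 + 4 * E₂)) with hC
  have W0 : 0 < W := by positivity
  have C0 : 0 < C := by positivity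
  set δ := min 1 (ε * (1 - L) / (2 * C)) with hδ
  have hL1' : 0 < 1 - L := by linarith
  have δ0 : 0 < δ := by positivity
  have δ1 : δ ≤ 1 := min_le_left _ _
  have δ2 : C * δ < ε * (1 - L) := by
    have h1 : δ ≤ ε * (1 - L) / (2 * C) := min_le_right _ _
    rw [le_div_iff₀ (by positivity)] at h1
    have : 0 < ε * (1 - L) := by positivity
    linarith
  obtain ⟨s, -, hs⟩ : ∃ s : Finset (Fin n → ℝ), True ∧
      ∀ u : Fin n → ℝ, ‖u‖ ≤ M₀ → ∃ v ∈ s, ‖u - v‖ ≤ δ := by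
    obtain ⟨t, -, htf, ht⟩ := Metric.totallyBounded_iff.1
      (isCompact_closedBall (0 : Fin n → ℝ) M₀).totallyBounded δ δ0 |>.imp
        fun t h => (⟨trivial, h.1, h.2⟩ : True ∧ _ ∧ _)
    refine ⟨htf.toFinset, trivial, fun u hu => ?_⟩
    have := ht (show u ∈ Metric.closedBall (0 : Fin n → ℝ) M₀ by simpa using hu)
    simp only [Set.mem_iUnion, Metric.mem_ball] at this
    obtain ⟨v, hv, huv⟩ := this
    exact ⟨v, by simpa using hv, by rw [← dist_eq_norm]; exact huv.le⟩
  have good := ((hA_ap.good.and hg_ap.good).and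
    ((GoodPer.finset s fun u => (hQ_ap u).good).and
      (GoodPer.finset (s ×ˢ s) fun u => (hG_ap u.1 u.2).good)))
  obtain ⟨l, l0, hl⟩ := good.1 δ δ0
  refine ⟨l, l0, fun c => ?_⟩
  obtain ⟨τ, t1, t2, ⟨pA, pg⟩, pQ, pG⟩ := hl c
  refine ⟨τ, t1, t2, ?_⟩
  have pg' : ∀ t, g (t + τ) = g t := by
    intro t
    have h1 : ‖g (t + τ) - g t‖ < 1 := (pg t).trans_le δ1
    rw [Int.norm_eq_abs] at h1
    have h2 : |g (t + τ) - g t| < 1 := by exact_mod_cast h1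
    rw [Int.abs_lt_one_iff] at h2
    omega
  have pQ' : ∀ t u, ‖u‖ ≤ M₀ → ‖Q (t + τ) u - Q t u‖ ≤ (2 * E₁ + 1) * δ := by
    intro t u hu
    obtain ⟨v, hv, huv⟩ := hs u hu
    have h1 := (hQ_lip (t + τ) u v).trans (mul_le_mul_of_nonneg_left huv hE₁.le)
    have h2 := (hQ_lip t u v).trans (mul_le_mul_of_nonneg_left huv hE₁.le)
    have h3 := pQ v hv t
    have e : Q (t + τ) u - Q t u = (Q (t + τ) u - Q (t + τ) v) + (Q (t + τ) v - Q t v)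
      - (Q t u - Q t v) := by abel
    rw [e]
    refine (norm_sub_le _ _).trans ((add_le_add_left (norm_add_le _ _) _).trans ?_)
    linarith
  have pG' : ∀ t u w, ‖u‖ ≤ M₀ → ‖w‖ ≤ M₀ → ‖G (t + τ) u w - G t u w‖ ≤ (1 + 4 * E₂) * δ := by
    intro t u w hu hw
    obtain ⟨v, hv, huv⟩ := hs u hu
    obtain ⟨z, hz, hwz⟩ := hs w hw
    have h1 := (hG_lip (t + τ) u v w z).trans
      (mul_le_mul_of_nonneg_left (add_le_add huv hwz) hE₂.le)
    have h2 := (hG_lip t u v w z).trans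
      (mul_le_mul_of_nonneg_left (add_le_add huv hwz) hE₂.le)
    have h3 := pG (v, z) (by simp [hv, hz]) t
    simp only at h3
    have e : G (t + τ) u w - G t u w = (G (t + τ) u w - G (t + τ) v z)
      + (G (t + τ) v z - G t v z) - (G t u w - G t v z) := by abel
    rw [e]
    refine (norm_sub_le _ _).trans ((add_le_add_left (norm_add_le _ _) _).trans ?_)
    linarith
  -- the sup of the difference
  have hbd : BddAbove (Set.range fun t => ‖x (t + τ) - x t‖) := by
    refine ⟨M₀ + M₀, ?_⟩
    rintro _ ⟨t, rfl⟩
    exact (norm_sub_le _ _).trans (add_le_add (hxM _) (hxM _))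
  set d := ⨆ t, ‖x (t + τ) - x t‖ with hd
  have hdt : ∀ t, ‖x (t + τ) - x t‖ ≤ d := fun t => le_ciSup hbd t
  have d0 : 0 ≤ d := (norm_nonneg _).trans (hdt 0)
  have hdt' : ∀ t, ‖x (t + τ - g (t + τ)) - x (t - g t)‖ ≤ d := fun t => by
    rw [pg', show t + τ - g t = t - g t + τ by ring]; exact hdt _
  have qd : ∀ t, ‖Q (t + τ) (x (t + τ - g (t + τ))) - Q t (x (t - g t))‖ ≤
      (2 * E₁ + 1) * δ + E₁ * d := by
    intro t
    refine (norm_sub_le_norm_sub_add_norm_sub _ (Q t (x (t + τ - g (t + τ)))) _).trans ?_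
    exact add_le_add (pQ' _ _ (hxM _)) ((hQ_lip _ _ _).trans
      (mul_le_mul_of_nonneg_left (hdt' t) hE₁.le))
  have gd : ∀ t, ‖G (t + τ) (x (t + τ)) (x (t + τ - g (t + τ))) - G t (x t) (x (t - g t))‖ ≤
      (1 + 4 * E₂) * δ + E₂ * (d + d) := by
    intro t
    refine (norm_sub_le_norm_sub_add_norm_sub _
      (G t (x (t + τ)) (x (t + τ - g (t + τ)))) _).trans ?_
    exact add_le_add (pG' _ _ _ (hxM _) (hxM _)) ((hG_lip _ _ _ _ _).trans
      (mul_le_mul_of_nonneg_left (add_le_add (hdt t) (hdt' t)) hE₂.le))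
  set w := Grn U V (Lam A g Q G x) with hw
  have hwb : ∀ t, ‖w t‖ ≤ W := by
    intro t
    have e : w t = x t - Q t (x (t - g t)) := by rw [eq_sub_iff_add_eq', ← hx t]
    rw [e]
    exact (norm_sub_le _ _).trans (add_le_add (hxM _) (hQb _ _ _ (hxM _)))
  have hwr : ∀ t, w (t + 1) = A t (w t) + Lam A g Q G x t := fun t => D.recur (hLb x _ hxM) t
  set k : ℤ → Fin n → ℝ := fun t => (A (t + τ) - A t) (w (t + τ)) +
    (Lam A g Q G x (t + τ) - Lam A g Q G x t) with hk
  have hkb : ∀ t, ‖k t‖ ≤ δ * W + (δ * W + (N + 1) * ((2 * E₁ + 1) * δ + E₁ * d) +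
      ((1 + 4 * E₂) * δ + E₂ * (d + d))) := by
    intro t
    have e : Lam A g Q G x (t + τ) - Lam A g Q G x t =
        (A (t + τ) - A t) (Q (t + τ) (x (t + τ - g (t + τ)))) +
        (A t - 1) (Q (t + τ) (x (t + τ - g (t + τ))) - Q t (x (t - g t))) +
        (G (t + τ) (x (t + τ)) (x (t + τ - g (t + τ))) - G t (x t) (x (t - g t))) := by
      simp only [Lam, map_sub, sub_apply, one_apply_eq_self]; abel
    have hdA : ∀ u, ‖u‖ ≤ W → ‖(A (t + τ) - A t) u‖ ≤ δ * W := fun u hu =>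
      ((A (t + τ) - A t).le_opNorm _).trans
        (mul_le_mul (pA t).le hu (norm_nonneg _) δ0.le)
    simp only [hk]
    refine (norm_add_le _ _).trans (add_le_add (hdA _ (hwb _)) ?_)
    rw [e]
    refine (norm_add_le _ _).trans (add_le_add ((norm_add_le _ _).trans (add_le_add ?_ ?_)) (gd t))
    · refine hdA _ ((hQb _ _ _ (hxM _)).trans ?_)
      linarith
    · exact ((A t - 1).le_opNorm _).trans
        (mul_le_mul (hA1 t) (qd t) (norm_nonneg _) (by positivity))
  have hz : ∀ t, w (t + τ) - w t = Grn U V k t := by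
    refine D.uniq (y := fun t => w (t + τ) - w t) (Y := W + W) hkb
      (fun t => (norm_sub_le _ _).trans (add_le_add (hwb _) (hwb _))) (fun t => ?_)
    have h1 := hwr (t + τ)
    rw [show t + τ + 1 = t + 1 + τ by ring] at h1
    simp only [hk, h1, hwr t, map_sub, sub_apply]
    abel
  have key : d ≤ L * d + C * δ := by
    refine ciSup_le fun t => ?_
    have e : x (t + τ) - x t = (Q (t + τ) (x (t + τ - g (t + τ))) - Q t (x (t - g t))) +
        (w (t + τ) - w t) := by
      rw [hx (t + τ), hx t]; abel
    rw [e, hz]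
    refine (norm_add_le _ _).trans ((add_le_add (qd t) (D.bound hkb t)).trans (le_of_eq ?_))
    rw [hL, hC]; ring
  have hdε : d < ε := by
    by_contra hc
    push Not at hc
    have : ε * (1 - L) ≤ d * (1 - L) := by gcongr
    linarith
  exact fun t => (hdt t).trans_lt hdε
end
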